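/- Let X be a simply connected, locally simply connected metric space, D a countable dense subset, and f a proper path in E(X,D). Then there exists a proper path g in E(X,D), homotopic to f rel endpoints, such that the word W^g read off from g is the reduced word equivalent to W^f. -/

import Mathlib

open Classical

noncomputable section

namespace EarringPaper

variable {X : Type*} [MetricSpace X]

/-- The earring space `E(X,D)`: the base copy `X × {o}` together with a copy of the
circle attached at each point `d n` of the countable set `D = range d`. -/
structure ESp (X : Type*) [MetricSpace X] (d : ℕ+ → X) where
  pt : X × Circle
  mem : pt.2 = 1 ∨ ∃ n : ℕ+, pt.1 = d n

/-- The scaling weight `1/n` at `x = d n` (and `0` off `D`). -/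
def wt (d : ℕ+ → X) (x : X) : ℝ :=
  if h : ∃ n : ℕ+, x = d n then 1 / (h.choose : ℝ) else 0

/-- The earring metric `ρ` on `E(X,D)`. -/
def rho (d : ℕ+ → X) (p q : X × Circle) : ℝ :=
  if p.1 = q.1 ∧ ∃ n : ℕ+, p.1 = d n then wt d p.1 * dist p.2 q.2
  else dist p.1 q.1 + wt d p.1 * dist p.2 1 + wt d q.1 * dist q.2 1

/-- `E(X,D)` carries the topology of the metric `ρ` (generated by the `ρ`-balls). -/
instance (d : ℕ+ → X) : TopologicalSpace (ESp X d) :=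
  TopologicalSpace.generateFrom
    {s | ∃ (p : ESp X d) (r : ℝ), s = {q : ESp X d | rho d p.pt q.pt < r}}

/-- The points of the base copy `X × {o}` of `X` inside `E(X,D)`. -/
def InX {d : ℕ+ → X} (p : ESp X d) : Prop := p.pt.2 = 1

/-- The inclusion `X → E(X,D)`, `x ↦ (x,o)`. -/
def emb (d : ℕ+ → X) (x : X) : ESp X d := ⟨(x, 1), Or.inl rfl⟩

/-- `f` traverses, on `[u,v]`, the fixed winding of the circle attached at `d n`. -/
def IsWinding (d : ℕ+ → X) (f : ℝ → ESp X d) (u v : ℝ) (n : ℕ+) : Prop :=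
  ∃ φ : ℝ → ℝ, ContinuousOn φ (Set.Icc u v) ∧ MonotoneOn φ (Set.Icc u v) ∧
    φ u = 0 ∧ φ v = 1 ∧
    ∀ t ∈ Set.Icc u v, (f t).pt = (d n, Circle.exp (2 * Real.pi * φ t))

/-- `f` traverses, on `[u,v]`, the reverse of the fixed winding of the circle at `d n`. -/
def IsRevWinding (d : ℕ+ → X) (f : ℝ → ESp X d) (u v : ℝ) (n : ℕ+) : Prop :=
  ∃ φ : ℝ → ℝ, ContinuousOn φ (Set.Icc u v) ∧ MonotoneOn φ (Set.Icc u v) ∧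
    φ u = 0 ∧ φ v = 1 ∧
    ∀ t ∈ Set.Icc u v, (f t).pt = (d n, Circle.exp (-(2 * Real.pi) * φ t))

/-- A proper path in `E(X,D)` (with domain `[a,b]`): its endpoints lie in `X`, and each
maximal excursion out of `X` returning to the same point is a single winding or reverse
winding of one of the attached circles. -/
def IsProper (d : ℕ+ → X) (f : ℝ → ESp X d) (a b : ℝ) : Prop :=
  ContinuousOn f (Set.Icc a b) ∧ InX (f a) ∧ InX (f b) ∧
  ∀ u v, a ≤ u → u < v → v ≤ b → InX (f u) → InX (f v) →
    (∀ t ∈ Set.Ioo u v, ¬InX (f t)) → f u = f v →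
    ∃ n : ℕ+, IsWinding d f u v n ∨ IsRevWinding d f u v n

/-- Homotopy of paths `[a,b] → E(X,D)` relative to the endpoints. -/
def HtpyRel (d : ℕ+ → X) (f g : ℝ → ESp X d) (a b : ℝ) : Prop :=
  ∃ H : ℝ × ℝ → ESp X d,
    ContinuousOn H (Set.Icc a b ×ˢ Set.Icc (0 : ℝ) 1) ∧
    (∀ s ∈ Set.Icc a b, H (s, 0) = f s ∧ H (s, 1) = g s) ∧
    (∀ t ∈ Set.Icc (0 : ℝ) 1, H (a, t) = f a ∧ H (b, t) = f b)

/-- `Y` is locally simply connected: every point has a neighborhood basis of simply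
connected neighborhoods. -/
def LocSimplyConnected (Y : Type*) [TopologicalSpace Y] : Prop :=
  ∀ y : Y, ∀ U ∈ nhds y, ∃ V ∈ nhds y, V ⊆ U ∧ SimplyConnectedSpace V

end EarringPaper

noncomputable section

namespace EarringPaper

/-- An infinitary word over the alphabet `D`: a function from a countable linearly
ordered index set to the letters `a`/`a⁻` (`(a, true)`/`(a, false)`), in which each
letter occurs only finitely often. -/
structure InfWord (D : Type*) where
  ι : Type
  [ord : LinearOrder ι]
  [cnt : Countable ι]
  letter : ι → D × Bool
  finOcc : ∀ a : D, {i : ι | (letter i).1 = a}.Finite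

attribute [instance] InfWord.ord InfWord.cnt

variable {D : Type*}

lemma InfWord.finF (W : InfWord D) (F : Finset D) :
    {i : W.ι | (W.letter i).1 ∈ F}.Finite := by
  have h : {i : W.ι | (W.letter i).1 ∈ F} = ⋃ a ∈ F, {i : W.ι | (W.letter i).1 = a} := by
    ext i; simp
  rw [h]
  exact F.finite_toSet.biUnion fun a _ => W.finOcc a

/-- The finite word `W_F`: the restriction of `W` to the letters from the finite set `F`,
evaluated as an element of the free group on `D`. -/
def InfWord.evalF (W : InfWord D) (F : Finset D) : FreeGroup D :=
  (((W.finF F).toFinset.sort (· ≤ ·)).map fun i => FreeGroup.mk [W.letter i]).prod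

/-- `W` is equivalent to the empty word: all its finite restrictions `W_F` are trivial. -/
def InfWord.IsNull (W : InfWord D) : Prop := ∀ F : Finset D, W.evalF F = 1

/-- The subword of `W` supported on a set `S` of indices. -/
def InfWord.restrict (W : InfWord D) (S : Set W.ι) : InfWord D where
  ι := S
  letter i := W.letter i.val
  finOcc a := by
    have h : {i : S | (W.letter i.val).1 = a} =
        Subtype.val ⁻¹' {i : W.ι | (W.letter i).1 = a} := rfl
    rw [h]
    exact (W.finOcc a).preimage Subtype.val_injective.injOn

/-- An order-convex set of indices (the support of a subword). -/
def IsConvexSub {W : InfWord D} (S : Set W.ι) : Prop :=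
  ∀ i ∈ S, ∀ j ∈ S, ∀ k, i ≤ k → k ≤ j → k ∈ S

/-- An infinitary word is reduced if no nonempty subword is equivalent to the empty word. -/
def InfWord.Reduced (W : InfWord D) : Prop :=
  ∀ S : Set W.ι, S.Nonempty → IsConvexSub S → ¬(W.restrict S).IsNull

/-- A noncrossing inverse pairing on the infinitary word `W`. -/
structure InfNCIP (W : InfWord D) (Γ : Set (W.ι × W.ι)) : Prop where
  lt : ∀ p ∈ Γ, p.1 < p.2
  inv : ∀ p ∈ Γ, (W.letter p.1).1 = (W.letter p.2).1 ∧
    (W.letter p.1).2 = !(W.letter p.2).2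
  disj : ∀ p ∈ Γ, ∀ q ∈ Γ, p ≠ q → p.1 ≠ q.1 ∧ p.1 ≠ q.2 ∧ p.2 ≠ q.1 ∧ p.2 ≠ q.2
  noncross : ∀ p ∈ Γ, ∀ q ∈ Γ, ¬(p.1 < q.1 ∧ q.1 < p.2 ∧ p.2 < q.2)
  covered : ∀ p ∈ Γ, ∀ k, p.1 ≤ k → k ≤ p.2 → ∃ q ∈ Γ, q.1 = k ∨ q.2 = k

end EarringPaper

namespace EarringPaper

/-- `W` is the word `W^f` read off from the proper path `f : [a,b] → E(X,D)`, realized by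
the family of disjoint open intervals `(u i, v i)`: these intervals are exactly the
components of `f⁻¹(E(X,D)∖X)`, listed in order, and on the `i`-th of them `f` performs the
winding (or reverse winding, according to the sign of the letter) of the circle attached
at `d ((W.letter i).1)`. -/
def Realizes {X : Type*} [MetricSpace X] (d : ℕ+ → X) (f : ℝ → ESp X d) (a b : ℝ)
    (W : InfWord ℕ+) (u v : W.ι → ℝ) : Prop :=
  (∀ i, a ≤ u i ∧ u i < v i ∧ v i ≤ b) ∧
  (∀ i j, i < j → v i ≤ u j) ∧
  (∀ i, if (W.letter i).2 then IsWinding d f (u i) (v i) (W.letter i).1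
        else IsRevWinding d f (u i) (v i) (W.letter i).1) ∧
  (∀ t ∈ Set.Icc a b, InX (f t) ↔ ∀ i, t ∉ Set.Ioo (u i) (v i))

end EarringPaper

namespace EarringPaper

section

open Topology unitInterval

/-- In a family of bounded maps that contains a constant map as soon as it contains maps arbitrarily
close to it, some member is almost closest to the constant. -/
lemma exists_almost_closest {K X : Type*} [MetricSpace X] (S : Set (K → X)) (x : X)
    (hne : ∃ F ∈ S, ∃ r, ∀ z, dist (F z) x ≤ r)
    (hconst : (∀ r > 0, ∃ F ∈ S, ∀ z, dist (F z) x ≤ r) → (fun _ => x) ∈ S) :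
    ∃ F ∈ S, ∀ G ∈ S, ∀ r > 0, (∀ z, dist (G z) x ≤ r) → ∀ z, dist (F z) x ≤ 2 * r := by
  by_cases h : ∀ r > 0, ∃ F ∈ S, ∀ z, dist (F z) x ≤ r
  · refine ⟨_, hconst h, fun G _ r hr _ z => ?_⟩
    simp only [dist_self]; positivity
  · push Not at h
    obtain ⟨r₀, hr₀, h⟩ := h
    let E : Set ℝ := {r | ∃ F ∈ S, ∀ z, dist (F z) x ≤ r}
    have hE : E.Nonempty := let ⟨F, hF, r, hr⟩ := hne; ⟨r, F, hF, hr⟩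
    have hlb : ∀ r ∈ E, r₀ ≤ r := by
      rintro r ⟨F, hF, hr⟩
      obtain ⟨z, hz⟩ := h F hF
      exact hz.le.trans (hr z)
    have h0 : r₀ ≤ sInf E := le_csInf hE hlb
    obtain ⟨e, ⟨F, hF, he⟩, hlt⟩ := exists_lt_of_csInf_lt hE (show sInf E < 2 * sInf E by linarith)
    refine ⟨F, hF, fun G hG r _ hr z => (he z).trans (hlt.le.trans ?_)⟩
    have : sInf E ≤ r := csInf_le ⟨r₀, hlb⟩ ⟨G, hG, hr⟩
    linarith

/-- The chord homotopy between the two boundary paths of the unit square from `(0,0)` to `(1,1)`. -/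
def chord (z : I × I) : I × I :=
  (Set.projIcc 0 1 zero_le_one
      ((1 - z.1.1) * max (2 * z.2.1 - 1) 0 + z.1.1 * min (2 * z.2.1) 1),
    Set.projIcc 0 1 zero_le_one
      ((1 - z.1.1) * min (2 * z.2.1) 1 + z.1.1 * max (2 * z.2.1 - 1) 0))

lemma continuous_chord : Continuous chord := by
  unfold chord
  refine Continuous.prodMk (continuous_projIcc.comp ?_) (continuous_projIcc.comp ?_) <;> fun_prop

lemma chord_coe (t s : I) :
    ((chord (t, s)).1 : ℝ) = (1 - t.1) * max (2 * s.1 - 1) 0 + t.1 * min (2 * s.1) 1 ∧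
    ((chord (t, s)).2 : ℝ) = (1 - t.1) * min (2 * s.1) 1 + t.1 * max (2 * s.1 - 1) 0 := by
  obtain ⟨t, ht0, ht1⟩ := t
  obtain ⟨s, hs0, hs1⟩ := s
  have a0 : 0 ≤ max (2 * s - 1) 0 := le_max_right _ _
  have a1 : max (2 * s - 1) 0 ≤ 1 := max_le (by linarith) (by norm_num)
  have b0 : 0 ≤ min (2 * s) 1 := le_min (by linarith) (by norm_num)
  have b1 : min (2 * s) 1 ≤ 1 := min_le_right _ _
  simp only [chord]
  refine ⟨?_, ?_⟩ <;> rw [Set.projIcc_of_mem _ ⟨by nlinarith, by nlinarith⟩]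

lemma chord_sum (t s : I) :
    ((chord (t, s)).1 : ℝ) + (chord (t, s)).2 = 2 * s.1 := by
  rw [(chord_coe t s).1, (chord_coe t s).2]
  have : max (2 * s.1 - 1) 0 + min (2 * s.1) 1 = 2 * s.1 := by
    rcases le_total (2 * s.1) 1 with h | h
    · rw [max_eq_right (by linarith), min_eq_left h]; ring
    · rw [max_eq_left (by linarith), min_eq_right h]; ring
  linear_combination this

lemma chord_surjective : Function.Surjective chord := by
  rintro ⟨⟨x, hx0, hx1⟩, ⟨y, hy0, hy1⟩⟩
  have hs : (x + y) / 2 ∈ I := ⟨by linarith, by linarith⟩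
  set A := max (x + y - 1) 0 with hA
  set B := min (x + y) 1 with hB
  have hAx : A ≤ x := max_le (by linarith) hx0
  have hxB : x ≤ B := le_min (by linarith) hx1
  have hsum : A + B = x + y := by
    rcases le_total (x + y) 1 with h | h
    · rw [hA, hB, max_eq_right (by linarith), min_eq_left h]; ring
    · rw [hA, hB, max_eq_left (by linarith), min_eq_right h]; ring
  obtain ⟨t, ht, htx⟩ : ∃ t ∈ I, (1 - t) * A + t * B = x := by
    rcases (hAx.trans hxB).eq_or_lt with h | h
    · exact ⟨0, ⟨le_rfl, zero_le_one⟩, by linarith⟩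
    · refine ⟨(x - A) / (B - A), ⟨div_nonneg (by linarith) (by linarith),
        (div_le_one (by linarith)).2 (by linarith)⟩, ?_⟩
      have : B - A ≠ 0 := by linarith
      field_simp
      ring
  refine ⟨(⟨t, ht⟩, ⟨(x + y) / 2, hs⟩), ?_⟩
  have h2 : 2 * ((x + y) / 2) = x + y := by ring
  have hc := chord_coe ⟨t, ht⟩ ⟨(x + y) / 2, hs⟩
  simp only [h2, ← hA, ← hB] at hc
  refine Prod.ext (Subtype.ext ?_) (Subtype.ext ?_)
  · rw [hc.1]; exact htx
  · rw [hc.2]; change _ = y; linarith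

/-- In a simply connected space every map of the boundary of a square extends to the square. -/
lemma exists_square_filling {Y : Type*} [TopologicalSpace Y] [SimplyConnectedSpace Y]
    (b t l r : C(I, Y)) (hbl : b 0 = l 0) (hbr : b 1 = r 0) (hlt : l 1 = t 0) (htr : t 1 = r 1) :
    ∃ F : C(I × I, Y), (∀ s, F (s, 0) = b s) ∧ (∀ s, F (s, 1) = t s) ∧
      (∀ s, F (0, s) = l s) ∧ ∀ s, F (1, s) = r s := by
  let pb : Path (l 0) (r 0) := ⟨b, hbl, hbr⟩
  let pt : Path (l 1) (r 1) := ⟨t, hlt.symm, htr⟩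
  let pl : Path (l 0) (l 1) := ⟨l, rfl, rfl⟩
  let pr : Path (r 0) (r 1) := ⟨r, rfl, rfl⟩
  obtain ⟨K⟩ := SimplyConnectedSpace.paths_homotopic (pl.trans pt) (pb.trans pr)
  let θ : C(I × I, I × I) := ⟨chord, continuous_chord⟩
  have hq : IsQuotientMap θ :=
    continuous_chord.isClosedMap.isQuotientMap continuous_chord chord_surjective
  have hK : ∀ z w, chord z = chord w → K z = K w := by
    rintro ⟨t₁, s₁⟩ ⟨t₂, s₂⟩ h
    have hs : s₁ = s₂ := by
      have h1 := chord_sum t₁ s₁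
      rw [h, chord_sum] at h1
      exact Subtype.ext (by linarith)
    subst hs
    have h1 := (chord_coe t₁ s₁).1
    rw [h, (chord_coe t₂ s₁).1] at h1
    rcases eq_or_ne s₁ 0 with rfl | h0
    · simp
    rcases eq_or_ne s₁ 1 with rfl | h1'
    · simp
    have p0 : 0 < s₁.1 := lt_of_le_of_ne s₁.2.1 (fun h => h0 (Subtype.ext h.symm))
    have p1 : s₁.1 < 1 := lt_of_le_of_ne s₁.2.2 (fun h => h1' (Subtype.ext h))
    have hlt : max (2 * s₁.1 - 1) 0 < min (2 * s₁.1) 1 := by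
      rw [max_lt_iff, lt_min_iff, lt_min_iff]
      refine ⟨⟨?_, ?_⟩, ?_, ?_⟩ <;> linarith
    have : t₁ = t₂ := by
      have h2 : (t₁.1 - t₂.1) * (min (2 * s₁.1) 1 - max (2 * s₁.1 - 1) 0) = 0 := by linarith
      rcases mul_eq_zero.1 h2 with h3 | h3
      · exact Subtype.ext (by linarith)
      · linarith
    rw [this]
  let F : C(I × I, Y) := hq.lift K.toContinuousMap (fun z w h => hK z w h)
  have hF : ∀ z, F (chord z) = K z := fun z =>
    congrArg (fun f : C(I × I, Y) => f z) 
      (hq.lift_comp K.toContinuousMap (fun z w h => hK z w h))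
  have half : ∀ s : I, (s.1 / 2) ∈ I := fun s => ⟨by linarith [s.2.1], by linarith [s.2.2]⟩
  have half' : ∀ s : I, ((1 + s.1) / 2) ∈ I :=
    fun s => ⟨by linarith [s.2.1], by linarith [s.2.2]⟩
  have e : ∀ s : I, 2 * (s.1 / 2) = s.1 := fun s => by ring
  have e' : ∀ s : I, 2 * ((1 + s.1) / 2) = 1 + s.1 := fun s => by ring
  have m1 : ∀ s : I, max (s.1 - 1) 0 = 0 := fun s => max_eq_right (by linarith [s.2.2])
  have m2 : ∀ s : I, min s.1 1 = s.1 := fun s => min_eq_left s.2.2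
  have m3 : ∀ s : I, max (1 + s.1 - 1) 0 = s.1 := fun s => by
    rw [add_sub_cancel_left]; exact max_eq_left s.2.1
  have m4 : ∀ s : I, min (1 + s.1) 1 = 1 := fun s => min_eq_right (by linarith [s.2.1])
  refine ⟨F, fun s => ?_, fun s => ?_, fun s => ?_, fun s => ?_⟩
  · have : chord (1, ⟨s.1 / 2, half s⟩) = (s, 0) := by
      have hc := chord_coe 1 ⟨s.1 / 2, half s⟩
      simp only [e, m1, m2] at hc
      exact Prod.ext (Subtype.ext (by rw [hc.1]; simp)) (Subtype.ext (by rw [hc.2]; simp))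
    rw [← this, hF, K.apply_one]
    simp only [Path.coe_toContinuousMap, Path.trans_apply]
    rw [dif_pos (by linarith [s.2.2])]
    change b _ = b s
    congr 1
    exact Subtype.ext (e s)
  · have : chord (0, ⟨(1 + s.1) / 2, half' s⟩) = (s, 1) := by
      have hc := chord_coe 0 ⟨(1 + s.1) / 2, half' s⟩
      simp only [e', m3, m4] at hc
      exact Prod.ext (Subtype.ext (by rw [hc.1]; simp)) (Subtype.ext (by rw [hc.2]; simp))
    rw [← this, hF, K.apply_zero]
    simp only [Path.coe_toContinuousMap, Path.trans_apply]
    split_ifs with h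
    · have hs : s = 0 := Subtype.ext (le_antisymm (by change s.1 ≤ 0; linarith) s.2.1)
      subst hs
      rw [← hlt]
      change l _ = l 1
      congr 1
      exact Subtype.ext (by simp)
    · change t _ = t s
      congr 1
      exact Subtype.ext (by change 2 * ((1 + s.1) / 2) - 1 = s.1; ring)
  · have : chord (0, ⟨s.1 / 2, half s⟩) = (0, s) := by
      have hc := chord_coe 0 ⟨s.1 / 2, half s⟩
      simp only [e, m1, m2] at hc
      exact Prod.ext (Subtype.ext (by rw [hc.1]; simp)) (Subtype.ext (by rw [hc.2]; simp))
    rw [← this, hF, K.apply_zero]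
    simp only [Path.coe_toContinuousMap, Path.trans_apply]
    rw [dif_pos (by linarith [s.2.2])]
    change l _ = l s
    congr 1
    exact Subtype.ext (e s)
  · have : chord (1, ⟨(1 + s.1) / 2, half' s⟩) = (1, s) := by
      have hc := chord_coe 1 ⟨(1 + s.1) / 2, half' s⟩
      simp only [e', m3, m4] at hc
      exact Prod.ext (Subtype.ext (by rw [hc.1]; simp)) (Subtype.ext (by rw [hc.2]; simp))
    rw [← this, hF, K.apply_one]
    simp only [Path.coe_toContinuousMap, Path.trans_apply]
    split_ifs with h
    · have hs : s = 0 := Subtype.ext (le_antisymm (by change s.1 ≤ 0; linarith) s.2.1)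
      subst hs
      change b _ = r 0
      rw [← hbr]
      congr 1
      exact Subtype.ext (by simp)
    · change r _ = r s
      congr 1
      exact Subtype.ext (by change 2 * ((1 + s.1) / 2) - 1 = s.1; ring)

/-- A path of nearly minimal extent among all paths with the same endpoints. -/
def IsTautPath {X : Type*} [MetricSpace X] (h : C(I, X)) : Prop :=
  ∀ h' : C(I, X), h' 0 = h 0 → h' 1 = h 1 → ∀ r > 0, (∀ t, dist (h' t) (h 0) ≤ r) →
    ∀ t, dist (h t) (h 0) ≤ 2 * r

/-- A square of nearly minimal extent among all squares with the same boundary. -/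
def IsTautSquare {X : Type*} [MetricSpace X] (F : C(I × I, X)) : Prop :=
  ∀ G : C(I × I, X), (∀ s, G (s, 0) = F (s, 0)) → (∀ s, G (s, 1) = F (s, 1)) →
    (∀ s, G (0, s) = F (0, s)) → (∀ s, G (1, s) = F (1, s)) →
    ∀ r > 0, (∀ z, dist (G z) (F (0, 0)) ≤ r) → ∀ z, dist (F z) (F (0, 0)) ≤ 2 * r

lemma exists_dist_le_of_compact {K X : Type*} [TopologicalSpace K] [CompactSpace K]
    [MetricSpace X] (F : C(K, X)) (x : X) : ∃ r, ∀ z, dist (F z) x ≤ r := by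
  obtain ⟨r, hr⟩ := (isCompact_range (f := fun z => dist (F z) x) (by fun_prop)).bddAbove
  exact ⟨r, fun z => hr ⟨z, rfl⟩⟩

lemma eq_of_forall_dist_le {X : Type*} [MetricSpace X] {x y : X}
    (h : ∀ r > 0, dist x y ≤ r) : x = y :=
  dist_le_zero.1 (le_of_forall_pos_le_add fun r hr => by simpa using h r hr)

lemma exists_tautPath {X : Type*} [MetricSpace X] [PathConnectedSpace X] (x y : X) :
    ∃ h : C(I, X), h 0 = x ∧ h 1 = y ∧ IsTautPath h := by
  obtain ⟨γ⟩ := PathConnectedSpace.joined x y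
  obtain ⟨r, hr⟩ := exists_dist_le_of_compact γ.toContinuousMap x
  obtain ⟨F, ⟨hc, h0, h1⟩, hF⟩ := exists_almost_closest
    {F : I → X | Continuous F ∧ F 0 = x ∧ F 1 = y} x
    ⟨γ, ⟨γ.continuous, γ.source, γ.target⟩, r, hr⟩ (fun H => by
      refine ⟨continuous_const, rfl, (eq_of_forall_dist_le fun r hr => ?_).symm⟩
      obtain ⟨F, ⟨-, -, h1⟩, hF⟩ := H r hr
      rw [← h1]; exact hF 1)
  refine ⟨⟨F, hc⟩, h0, h1, fun h' h0' h1' r hr H => ?_⟩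
  change h' 0 = F 0 at h0'
  change h' 1 = F 1 at h1'
  change ∀ t, dist (h' t) (F 0) ≤ r at H
  change ∀ t, dist (F t) (F 0) ≤ 2 * r
  rw [h0] at H ⊢
  exact hF h' ⟨h'.continuous, h0'.trans h0, h1'.trans h1⟩ r hr H

lemma exists_tautSquare {X : Type*} [MetricSpace X] [SimplyConnectedSpace X]
    (b t l r : C(I, X)) (hbl : b 0 = l 0) (hbr : b 1 = r 0) (hlt : l 1 = t 0) (htr : t 1 = r 1) :
    ∃ F : C(I × I, X), (∀ s, F (s, 0) = b s) ∧ (∀ s, F (s, 1) = t s) ∧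
      (∀ s, F (0, s) = l s) ∧ (∀ s, F (1, s) = r s) ∧ IsTautSquare F := by
  obtain ⟨F₀, h₀⟩ := exists_square_filling b t l r hbl hbr hlt htr
  obtain ⟨R, hR⟩ := exists_dist_le_of_compact F₀ (b 0)
  obtain ⟨F, ⟨hc, hb, ht, hl, hr⟩, hF⟩ := exists_almost_closest
    {F : I × I → X | Continuous F ∧ (∀ s, F (s, 0) = b s) ∧ (∀ s, F (s, 1) = t s) ∧
      (∀ s, F (0, s) = l s) ∧ (∀ s, F (1, s) = r s)} (b 0)
    ⟨F₀, ⟨F₀.continuous, h₀⟩, R, hR⟩ (fun H => by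
      refine ⟨continuous_const, fun s => ?_, fun s => ?_, fun s => ?_, fun s => ?_⟩ <;>
      · refine (eq_of_forall_dist_le fun ε hε => ?_).symm
        obtain ⟨F, ⟨-, hb, ht, hl, hr⟩, hF⟩ := H ε hε
        simp only [← hb, ← ht, ← hl, ← hr] at hF ⊢
        exact hF _)
  refine ⟨⟨F, hc⟩, hb, ht, hl, hr, fun G hb' ht' hl' hr' ε hε H => ?_⟩
  change ∀ s, G (s, 0) = F (s, 0) at hb'
  change ∀ s, G (s, 1) = F (s, 1) at ht'
  change ∀ s, G (0, s) = F (0, s) at hl'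
  change ∀ s, G (1, s) = F (1, s) at hr'
  change ∀ t, dist (G t) (F (0, 0)) ≤ ε at H
  change ∀ t, dist (F t) (F (0, 0)) ≤ 2 * ε
  rw [hb] at H ⊢
  exact hF G ⟨G.continuous, fun s => (hb' s).trans (hb s), fun s => (ht' s).trans (ht s),
    fun s => (hl' s).trans (hl s), fun s => (hr' s).trans (hr s)⟩ ε hε H

lemma LocSimplyConnected.exists_nhds {X : Type*} [MetricSpace X] (hX : LocSimplyConnected X)
    (x : X) (U : Set X) (hU : U ∈ 𝓝 x) :
    ∃ V ∈ 𝓝 x, SimplyConnectedSpace V ∧ V ⊆ U ∧ ∃ r > 0, (∀ y ∈ V, ∀ z ∈ V, dist y z ≤ r) ∧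
      ∀ y ∈ V, ∀ z, dist z y ≤ 2 * r → z ∈ U := by
  obtain ⟨ε, hε, hεU⟩ := Metric.mem_nhds_iff.1 hU
  obtain ⟨V, hV, hVb, hsc⟩ := hX x (Metric.ball x (ε / 8)) (Metric.ball_mem_nhds _ (by positivity))
  have hb : ∀ y ∈ V, dist y x < ε / 8 := fun y hy => hVb hy
  refine ⟨V, hV, hsc, fun y hy => hεU ?_, ε / 4, by positivity, fun y hy z hz => ?_,
    fun y hy z hz => hεU ?_⟩
  · exact Metric.mem_ball.2 ((hb y hy).trans (by linarith))
  · have := dist_triangle_right y z x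
    linarith [hb y hy, hb z hz]
  · have := dist_triangle z y x
    exact Metric.mem_ball.2 (by linarith [hb y hy])

/-- Taut paths with endpoints in `V`, and taut squares bounded by such paths and by paths in `V`,
stay in `U`. -/
def TautControl {X : Type*} [MetricSpace X] (U V : Set X) : Prop :=
  ∃ V' : Set X, V ⊆ V' ∧
    (∀ h : C(I, X), IsTautPath h → h 0 ∈ V → h 1 ∈ V → ∀ t, h t ∈ V') ∧
    ∀ F : C(I × I, X), IsTautSquare F → (∀ s, F (s, 0) ∈ V') → (∀ s, F (s, 1) ∈ V') →
      (∀ s, F (0, s) ∈ V') → (∀ s, F (1, s) ∈ V') → ∀ z, F z ∈ U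

lemma LocSimplyConnected.exists_tautControl {X : Type*} [MetricSpace X]
    (hX : LocSimplyConnected X) (x : X) (U : Set X) (hU : U ∈ 𝓝 x) :
    ∃ V ∈ 𝓝 x, TautControl U V := by
  obtain ⟨V', hV', hsc', -, r', hr', hd', hz'⟩ := hX.exists_nhds x U hU
  obtain ⟨V, hV, hsc, hVV', r, hr, hd, hz⟩ := hX.exists_nhds x V' hV'
  refine ⟨V, hV, V', hVV', fun h hh h0 h1 t => ?_, fun F hF hb ht hl hr => ?_⟩
  · obtain ⟨γ⟩ := PathConnectedSpace.joined (⟨h 0, h0⟩ : V) ⟨h 1, h1⟩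
    refine hz _ h0 _ (hh ⟨fun t => (γ t).1, by fun_prop⟩ ?_ ?_ r hr (fun t => ?_) t)
    · change (γ 0).1 = _; rw [γ.source]
    · change (γ 1).1 = _; rw [γ.target]
    · exact hd _ (γ t).2 _ h0
  · obtain ⟨G, gb, gt, gl, gr⟩ := exists_square_filling (Y := V')
      ⟨fun s => ⟨F (s, 0), hb s⟩, by fun_prop⟩ ⟨fun s => ⟨F (s, 1), ht s⟩, by fun_prop⟩
      ⟨fun s => ⟨F (0, s), hl s⟩, by fun_prop⟩ ⟨fun s => ⟨F (1, s), hr s⟩, by fun_prop⟩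
      rfl rfl rfl rfl
    refine fun z => hz' _ (hb 0) _ (hF ⟨fun z => (G z).1, by fun_prop⟩ (fun s => ?_) (fun s => ?_)
      (fun s => ?_) (fun s => ?_) r' hr' (fun z => ?_) z)
    · exact congrArg Subtype.val (gb s)
    · exact congrArg Subtype.val (gt s)
    · exact congrArg Subtype.val (gl s)
    · exact congrArg Subtype.val (gr s)
    · exact hd' _ (G z).2 _ (hb 0)

/-- The closed square of the integer grid with lower left corner `c`. -/
def gridSq (c : ℤ × ℤ) : Set (ℝ × ℝ) :=
  {z | (c.1 ≤ z.1 ∧ z.1 ≤ c.1 + 1) ∧ (c.2 ≤ z.2 ∧ z.2 ≤ c.2 + 1)}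

lemma isClosed_gridSq (c : ℤ × ℤ) : IsClosed (gridSq c) :=
  (isClosed_Icc.prod isClosed_Icc : IsClosed (Set.Icc (c.1 : ℝ) (c.1 + 1) ×ˢ
    Set.Icc (c.2 : ℝ) (c.2 + 1)))

lemma mem_gridSq_floor (z : ℝ × ℝ) : z ∈ gridSq (⌊z.1⌋, ⌊z.2⌋) :=
  ⟨⟨Int.floor_le _, (Int.lt_floor_add_one _).le⟩, Int.floor_le _, (Int.lt_floor_add_one _).le⟩

lemma locallyFinite_gridSq : LocallyFinite gridSq := by
  intro z
  refine ⟨Metric.ball z 1, Metric.ball_mem_nhds z one_pos,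
    (Set.finite_Icc ((⌊z.1⌋ - 2, ⌊z.2⌋ - 2) : ℤ × ℤ) (⌊z.1⌋ + 2, ⌊z.2⌋ + 2)).subset ?_⟩
  rintro ⟨i, j⟩ ⟨w, ⟨⟨h1, h2⟩, h3, h4⟩, hw⟩
  rw [Metric.mem_ball, Prod.dist_eq, max_lt_iff, Real.dist_eq, Real.dist_eq, abs_lt, abs_lt] at hw
  obtain ⟨⟨w1, w2⟩, w3, w4⟩ := hw
  simp only at h1 h2 h3 h4
  have f1 := Int.floor_le z.1
  have f2 := Int.lt_floor_add_one z.1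
  have f3 := Int.floor_le z.2
  have f4 := Int.lt_floor_add_one z.2
  refine ⟨⟨?_, ?_⟩, ?_, ?_⟩ <;> simp only <;> (rify; linarith)

lemma floor_or (i : ℤ) (x : ℝ) (h : i ≤ x ∧ x ≤ i + 1) :
    (⌊x⌋ = i) ∨ (x = i + 1 ∧ ⌊x⌋ = i + 1) := by
  rcases h.2.lt_or_eq with h' | h'
  · exact Or.inl (Int.floor_eq_iff.2 ⟨h.1, h'⟩)
  · refine Or.inr ⟨h', ?_⟩
    rw [h', Int.floor_add_one, Int.floor_intCast]

lemma exists_grid_paths {X : Type*} [MetricSpace X] [PathConnectedSpace X] (w : ℤ × ℤ → X)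
    (S : Set (ℤ × ℤ)) (p : ℤ × ℤ → C(I, X)) (e : ℤ × ℤ)
    (h0 : ∀ c ∈ S, p c 0 = w c) (h1 : ∀ c ∈ S, p c 1 = w (c + e)) :
    ∃ h : ℤ × ℤ → C(I, X), (∀ c, h c 0 = w c) ∧ (∀ c, h c 1 = w (c + e)) ∧
      (∀ c ∈ S, h c = p c) ∧ ∀ c ∉ S, IsTautPath (h c) := by
  choose q q0 q1 hq using fun c => exists_tautPath (w c) (w (c + e))
  refine ⟨fun c => if c ∈ S then p c else q c, fun c => ?_, fun c => ?_, fun c hc => if_pos hc,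
    fun c hc => ?_⟩
  · dsimp only
    split_ifs with h
    exacts [h0 c h, q0 c]
  · dsimp only
    split_ifs with h
    exacts [h1 c h, q1 c]
  · simp only [if_neg hc]
    exact hq c

/-- Redefine a map on the unit grid: keep it on the squares in `𝒞`, prescribe its values at the
vertices away from `𝒞`, and fill in by taut paths and taut squares. -/
lemma exists_grid_map {X : Type*} [MetricSpace X] [SimplyConnectedSpace X] (𝒞 : Set (ℤ × ℤ))
    (P₀ : ℝ × ℝ → X) (hP₀ : Continuous P₀) (val : ℤ × ℤ → X) :
    ∃ P₁ : ℝ × ℝ → X, Continuous P₁ ∧ (∀ c ∈ 𝒞, Set.EqOn P₁ P₀ (gridSq c)) ∧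
      ∀ U V : Set X, TautControl U V → ∀ c ∉ 𝒞,
        val c ∈ V → val (c + (1, 0)) ∈ V → val (c + (0, 1)) ∈ V → val (c + (1, 1)) ∈ V →
        (∀ z ∈ gridSq c, (∃ c' ∈ 𝒞, z ∈ gridSq c') → P₀ z ∈ V) → ∀ z ∈ gridSq c, P₁ z ∈ U := by
  let pt : ℤ × ℤ → ℝ × ℝ := fun c => (c.1, c.2)
  let K : Set (ℝ × ℝ) := {z | ∃ c ∈ 𝒞, z ∈ gridSq c}
  let w : ℤ × ℤ → X := fun c => if pt c ∈ K then P₀ (pt c) else val c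
  let SH : Set (ℤ × ℤ) := {c | c ∈ 𝒞 ∨ c - (0, 1) ∈ 𝒞}
  let SV : Set (ℤ × ℤ) := {c | c ∈ 𝒞 ∨ c - (1, 0) ∈ 𝒞}
  let pH : ℤ × ℤ → C(I, X) := fun c => ⟨fun t => P₀ (c.1 + t, c.2), by fun_prop⟩
  let pV : ℤ × ℤ → C(I, X) := fun c => ⟨fun t => P₀ (c.1, c.2 + t), by fun_prop⟩
  have hSH : ∀ c ∈ SH, ∀ t : I, ((c.1 : ℝ) + t, (c.2 : ℝ)) ∈ K := by
    rintro c (h | h) t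
    · exact ⟨c, h, by simp [gridSq, t.2.1, t.2.2]⟩
    · exact ⟨_, h, by simp [gridSq, t.2.1, t.2.2]⟩
  have hSV : ∀ c ∈ SV, ∀ t : I, ((c.1 : ℝ), (c.2 : ℝ) + t) ∈ K := by
    rintro c (h | h) t
    · exact ⟨c, h, by simp [gridSq, t.2.1, t.2.2]⟩
    · exact ⟨_, h, by simp [gridSq, t.2.1, t.2.2]⟩
  have hw : ∀ c, pt c ∈ K → P₀ (pt c) = w c := fun c hc => (if_pos hc).symm
  have hpH : ∀ c t, pH c t = P₀ (c.1 + t, c.2) := fun c t => rfl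
  have hpV : ∀ c t, pV c t = P₀ (c.1, c.2 + t) := fun c t => rfl
  obtain ⟨h, h0, h1, hS, hT⟩ := exists_grid_paths w SH pH (1, 0)
    (fun c hc => by
      rw [← hw c (by simpa [pt] using hSH c hc 0), hpH]; simp [pt])
    (fun c hc => by
      rw [← hw _ (by simpa [pt] using hSH c hc 1), hpH]; simp [pt])
  obtain ⟨v, v0, v1, vS, vT⟩ := exists_grid_paths w SV pV (0, 1)
    (fun c hc => by
      rw [← hw c (by simpa [pt] using hSV c hc 0), hpV]; simp [pt])
    (fun c hc => by
      rw [← hw _ (by simpa [pt] using hSV c hc 1), hpV]; simp [pt])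
  have key : ∀ c, ∃ F : C(I × I, X), (∀ s, F (s, 0) = h c s) ∧ (∀ s, F (s, 1) = h (c + (0, 1)) s) ∧
      (∀ s, F (0, s) = v c s) ∧ (∀ s, F (1, s) = v (c + (1, 0)) s) ∧
      (c ∈ 𝒞 → ∀ s : I × I, F s = P₀ (c.1 + s.1, c.2 + s.2)) ∧ (c ∉ 𝒞 → IsTautSquare F) := by
    intro c
    by_cases hc : c ∈ 𝒞
    · refine ⟨⟨fun s => P₀ (c.1 + s.1, c.2 + s.2), by fun_prop⟩, fun s => ?_, fun s => ?_,
        fun s => ?_, fun s => ?_, fun _ s => rfl, fun H => absurd hc H⟩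
      · rw [hS c (Or.inl hc), hpH]; simp
      · rw [hS (c + (0, 1)) (Or.inr (by simpa using hc)), hpH]; simp
      · rw [vS c (Or.inl hc), hpV]; simp
      · rw [vS (c + (1, 0)) (Or.inr (by simpa using hc)), hpV]; simp
    · obtain ⟨F, a1, a2, a3, a4, a5⟩ := exists_tautSquare (h c) (h (c + (0, 1))) (v c)
        (v (c + (1, 0))) (by rw [h0, v0]) (by rw [h1, v0]) (by rw [v1, h0])
        (by rw [h1, v1]; congr 1; abel)
      exact ⟨F, a1, a2, a3, a4, fun H => absurd H hc, fun _ => a5⟩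
  choose F Fb Ft Fl Fr FC FT using key
  let pj : ℝ → I := Set.projIcc 0 1 zero_le_one
  have pj0 : pj 0 = 0 := Set.projIcc_left _
  have pj1 : pj 1 = 1 := Set.projIcc_right _
  let P₁ : ℝ × ℝ → X := fun z => F (⌊z.1⌋, ⌊z.2⌋) (pj (z.1 - ⌊z.1⌋), pj (z.2 - ⌊z.2⌋))
  have hP₁ : ∀ c, ∀ z ∈ gridSq c, P₁ z = F c (pj (z.1 - c.1), pj (z.2 - c.2)) := by
    rintro ⟨i, j⟩ ⟨x, y⟩ ⟨hx, hy⟩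
    simp only at hx hy
    simp only [P₁]
    rcases floor_or i x hx with hi | ⟨rfl, hi⟩ <;> rcases floor_or j y hy with hj | ⟨rfl, hj⟩
    · rw [hi, hj]
    · rw [hi, hj]
      push_cast
      rw [sub_self, add_sub_cancel_left, pj0, pj1, Fb, Ft]
      simp
    · rw [hi, hj]
      push_cast
      rw [sub_self, add_sub_cancel_left, pj0, pj1, Fl, Fr]
      simp
    · rw [hi, hj]
      push_cast
      rw [sub_self, sub_self, add_sub_cancel_left, add_sub_cancel_left, pj0, pj1, Fb, Ft, h0, h1]
      simp
  have pjc : ∀ i : ℤ, ∀ x : ℝ, (i ≤ x ∧ x ≤ i + 1) → (i : ℝ) + pj (x - i) = x := fun i x hx => by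
    simp only [pj]
    rw [Set.projIcc_of_mem _ ⟨by linarith, by linarith⟩]
    simp
  refine ⟨P₁, ?_, fun c hc z hz => ?_, ?_⟩
  · refine locallyFinite_gridSq.continuous ?_ isClosed_gridSq fun c => ?_
    · exact Set.eq_univ_of_forall fun z => Set.mem_iUnion.2 ⟨_, mem_gridSq_floor z⟩
    · refine ContinuousOn.congr (Continuous.continuousOn ?_) (hP₁ c)
      have : Continuous pj := continuous_projIcc
      fun_prop
  · rw [hP₁ c z hz, FC c hc]
    simp only [pjc _ _ hz.1, pjc _ _ hz.2]
  · rintro U V ⟨V', hVV', hpath, hsq⟩ c hc c1 c2 c3 c4 hK z hz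
    have hwV : ∀ c', pt c' ∈ gridSq c → val c' ∈ V → w c' ∈ V := fun c' hc' hv => by
      simp only [w]
      split_ifs with hk
      exacts [hK _ hc' hk, hv]
    have w1 : w c ∈ V := hwV _ (by simp [pt, gridSq]) c1
    have w2 : w (c + (1, 0)) ∈ V := hwV _ (by simp [pt, gridSq]) c2
    have w3 : w (c + (0, 1)) ∈ V := hwV _ (by simp [pt, gridSq]) c3
    have w4 : w (c + (1, 1)) ∈ V := hwV _ (by simp [pt, gridSq]) c4
    have hh : ∀ c', (∀ t : I, ((c'.1 : ℝ) + t, (c'.2 : ℝ)) ∈ gridSq c) → w c' ∈ V →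
        w (c' + (1, 0)) ∈ V → ∀ t, h c' t ∈ V' := fun c' hc' a1 a2 t => by
      by_cases hs : c' ∈ SH
      · rw [hS c' hs, hpH]
        exact hVV' (hK _ (hc' t) (hSH c' hs t))
      · exact hpath _ (hT c' hs) (by rwa [h0]) (by rwa [h1]) t
    have vv : ∀ c', (∀ t : I, ((c'.1 : ℝ), (c'.2 : ℝ) + t) ∈ gridSq c) → w c' ∈ V →
        w (c' + (0, 1)) ∈ V → ∀ t, v c' t ∈ V' := fun c' hc' a1 a2 t => by
      by_cases hs : c' ∈ SV
      · rw [vS c' hs, hpV]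
        exact hVV' (hK _ (hc' t) (hSV c' hs t))
      · exact hpath _ (vT c' hs) (by rwa [v0]) (by rwa [v1]) t
    rw [hP₁ c z hz]
    refine hsq _ (FT c hc) (fun s => ?_) (fun s => ?_) (fun s => ?_) (fun s => ?_) _
    · rw [Fb]
      exact hh c (fun t => by simp [gridSq, t.2.1, t.2.2]) w1 w2 s
    · rw [Ft]
      exact hh _ (fun t => by simp [gridSq, t.2.1, t.2.2]) w3 (by simpa [add_assoc] using w4) s
    · rw [Fl]
      exact vv c (fun t => by simp [gridSq, t.2.1, t.2.2]) w1 w3 s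
    · rw [Fr]
      exact vv _ (fun t => by simp [gridSq, t.2.1, t.2.2]) w2 (by simpa [add_assoc] using w4) s

lemma exists_scaled_grid_map {X : Type*} [MetricSpace X] [SimplyConnectedSpace X] {N : ℝ}
    (hN : 0 < N) (𝒞 : Set (ℤ × ℤ)) (val : ℝ × ℝ → X) (P₀ : C(ℝ × ℝ, X)) :
    ∃ P₁ : C(ℝ × ℝ, X), (∀ c ∈ 𝒞, ∀ z, N • z ∈ gridSq c → P₁ z = P₀ z) ∧
      ∀ U V : Set X, TautControl U V → ∀ c ∉ 𝒞,
        (∀ z, N • z ∈ gridSq c → val z ∈ V) →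
        (∀ z, N • z ∈ gridSq c → (∃ c' ∈ 𝒞, N • z ∈ gridSq c') → P₀ z ∈ V) →
        ∀ z, N • z ∈ gridSq c → P₁ z ∈ U := by
  obtain ⟨P₁, hc, h1, h2⟩ := exists_grid_map 𝒞 (fun z => P₀ (N⁻¹ • z)) (by fun_prop)
    (fun c => val (N⁻¹ • ((c.1 : ℝ), (c.2 : ℝ))))
  have e : ∀ z : ℝ × ℝ, N • N⁻¹ • z = z := fun z => smul_inv_smul₀ hN.ne' z
  have e' : ∀ z : ℝ × ℝ, N⁻¹ • N • z = z := fun z => inv_smul_smul₀ hN.ne' z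
  refine ⟨⟨fun z => P₁ (N • z), by fun_prop⟩, fun c hc z hz => ?_,
    fun U V hUV c hc hval hP z hz => ?_⟩
  · change P₁ (N • z) = P₀ z
    rw [h1 c hc hz]
    exact congrArg P₀ (e' z)
  · refine h2 U V hUV c hc (hval _ ?_) (hval _ ?_) (hval _ ?_) (hval _ ?_) (fun z hz hz' => ?_) _ hz
    · rw [e]; simp [gridSq]
    · rw [e]; simp [gridSq]
    · rw [e]; simp [gridSq]
    · rw [e]; simp [gridSq]
    · exact hP _ (by rwa [e]) (by rwa [e])

lemma dist_le_of_mem_gridSq {N : ℝ} (hN : 0 < N) {c : ℤ × ℤ} {z w : ℝ × ℝ}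
    (hz : N • z ∈ gridSq c) (hw : N • w ∈ gridSq c) : dist z w ≤ N⁻¹ := by
  have h : dist (N • z) (N • w) ≤ 1 := by
    obtain ⟨⟨h1, h2⟩, h3, h4⟩ := hz
    obtain ⟨⟨k1, k2⟩, k3, k4⟩ := hw
    rw [Prod.dist_eq, max_le_iff, Real.dist_eq, Real.dist_eq, abs_le, abs_le]
    refine ⟨⟨?_, ?_⟩, ?_, ?_⟩ <;> linarith
  rw [dist_smul₀, Real.norm_of_nonneg hN.le] at h
  rw [← one_div, le_div_iff₀ hN]
  linarith

/-- A continuous map from a closed subset of the plane to a simply connected, locally simply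
connected metric space extends to the plane. -/
theorem exists_planar_extension {X : Type*} [MetricSpace X] [SimplyConnectedSpace X]
    (hX : LocSimplyConnected X) {A : Set (ℝ × ℝ)} (hA : IsClosed A) (hne : A.Nonempty)
    {φ : ℝ × ℝ → X} (hφ : ContinuousOn φ A) :
    ∃ P : ℝ × ℝ → X, Continuous P ∧ Set.EqOn P φ A := by
  have hpos : ∀ k : ℕ, (0 : ℝ) < 2 ^ k := fun k => by positivity
  choose ν hνA hν using fun z => hA.exists_infDist_eq_dist hne z
  let r : ℝ × ℝ → ℝ := fun z => Metric.infDist z A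
  let δ : ℕ → ℝ := fun k => ((2 : ℝ) ^ k)⁻¹
  have hδ : ∀ k, 0 < δ k := fun k => inv_pos.2 (hpos k)
  have hδs : ∀ k, δ k = 2 * δ (k + 1) := fun k => by
    simp only [δ, pow_succ]; field_simp
  have hr : ∀ z w, r z ≤ r w + dist z w := fun z w => Metric.infDist_le_infDist_add_dist
  let 𝒟 : ℕ → Set (ℤ × ℤ) := fun k => {c | ∀ z, (2 : ℝ) ^ k • z ∈ gridSq c → 3 * δ k ≤ r z}
  let D : ℕ → Set (ℝ × ℝ) := fun k => {z | ∃ c ∈ 𝒟 k, (2 : ℝ) ^ k • z ∈ gridSq c}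
  let fl : ℕ → ℝ × ℝ → ℤ × ℤ := fun k z => (⌊((2 : ℝ) ^ k • z).1⌋, ⌊((2 : ℝ) ^ k • z).2⌋)
  have hfl : ∀ k z, (2 : ℝ) ^ k • z ∈ gridSq (fl k z) := fun k z => mem_gridSq_floor _
  have hdist : ∀ k c z w, (2 : ℝ) ^ k • z ∈ gridSq c → (2 : ℝ) ^ k • w ∈ gridSq c →
      dist z w ≤ δ k := fun k c z w hz hw => dist_le_of_mem_gridSq (hpos k) hz hw
  have hD3 : ∀ k, ∀ z ∈ D k, 3 * δ k ≤ r z := fun k z ⟨c, hc, hz⟩ => hc z hz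
  have hD4 : ∀ k z, 4 * δ k ≤ r z → z ∈ D k := fun k z hz =>
    ⟨fl k z, fun w hw => by linarith [hr z w, hdist k _ z w (hfl k z) hw], hfl k z⟩
  choose T hT1 hT2 using fun k => exists_scaled_grid_map (hpos k) (𝒟 k) (fun z => φ (ν z))
  let S : ℕ → C(ℝ × ℝ, X) := fun k =>
    Nat.rec (ContinuousMap.const _ (φ (ν 0))) (fun k P => T k P) k
  have hS : ∀ k, S (k + 1) = T k (S k) := fun k => rfl
  have hDmono : Monotone D := monotone_nat_of_le_succ fun k z hz => hD4 _ _ (by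
    linarith [hD3 k z hz, hδs k, hδ (k + 1)])
  have hSD : ∀ k m, k ≤ m → ∀ z ∈ D k, S m z = S k z := by
    intro k m hkm
    induction m, hkm using Nat.le_induction with
    | base => exact fun z _ => rfl
    | succ m hkm ih =>
      intro z hz
      obtain ⟨c, hc, hzc⟩ := hDmono hkm hz
      rw [hS, hT1 m _ c hc z hzc, ih z hz]
  let P : ℝ × ℝ → X := fun z => if h : ∃ k, z ∈ D k then S h.choose z else φ z
  have hPD : ∀ k, ∀ z ∈ D k, P z = S k z := fun k z hz => by
    have h : ∃ k, z ∈ D k := ⟨k, hz⟩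
    simp only [P, dif_pos h]
    rw [← hSD _ _ (le_max_left h.choose k) z h.choose_spec, hSD _ _ (le_max_right h.choose k) z hz]
  have hDA : ∀ k, ∀ z ∈ D k, z ∉ A := fun k z hz hzA => by
    have h1 : r z = 0 := Metric.infDist_zero_of_mem hzA
    linarith [hD3 k z hz, hδ k]
  have hPA : ∀ z ∈ A, P z = φ z := fun z hz => dif_neg fun ⟨k, hk⟩ => hDA k z hk hz
  have hsmall : ∀ ε > 0, ∃ k, δ k < ε := fun ε hε => by
    obtain ⟨k, hk⟩ := exists_pow_lt_of_lt_one hε (show (1 / 2 : ℝ) < 1 by norm_num)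
    exact ⟨k, by simpa [δ] using hk⟩
  have hexD : ∀ z ∉ A, ∃ k, z ∈ D k := fun z hz => by
    have : 0 < r z := (hA.notMem_iff_infDist_pos hne).1 hz
    obtain ⟨k, hk⟩ := hsmall (r z / 4) (by linarith)
    exact ⟨k, hD4 k z (by linarith)⟩
  refine ⟨P, continuous_iff_continuousAt.2 fun a => ?_, hPA⟩
  by_cases ha : a ∈ A
  · intro U hU
    rw [hPA a ha] at hU
    obtain ⟨V, hV, hUV⟩ := hX.exists_tautControl _ U hU
    obtain ⟨V', hV', hVV'⟩ := hX.exists_tautControl _ V hV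
    obtain ⟨ε, hε, hφε⟩ := Metric.mem_nhdsWithin_iff.1
      (hφ a ha (Filter.inter_mem (Filter.inter_mem hU hV) hV'))
    have hφε : ∀ z ∈ A, dist z a < ε → φ z ∈ U ∩ V ∩ V' := fun z hz hza => hφε ⟨hza, hz⟩
    refine Metric.mem_nhds_iff.2 ⟨min (ε / 10) 1, by positivity, fun z hz => ?_⟩
    obtain ⟨hz1, hz2⟩ := lt_min_iff.1 (Metric.mem_ball.1 hz)
    change P z ∈ U
    by_cases hzA : z ∈ A
    · rw [hPA z hzA]
      exact (hφε z hzA (by linarith)).1.1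
    have hex := hexD z hzA
    have hrz : r z ≤ dist z a := Metric.infDist_le_dist_of_mem ha
    have hm := Nat.find_spec hex
    have hmin : ∀ n < Nat.find hex, z ∉ D n := fun n hn => Nat.find_min hex hn
    obtain ⟨k, hk⟩ : ∃ k, Nat.find hex = k + 1 + 1 := by
      have h3 := hD3 _ _ hm
      rcases h : Nat.find hex with _ | _ | k
      · rw [h] at h3; norm_num [δ] at h3; linarith
      · rw [h] at h3; norm_num [δ] at h3; linarith
      · exact ⟨k, rfl⟩
    rw [hk] at hm hmin
    have h3 := hD3 _ _ hm
    have hc : fl (k + 1) z ∉ 𝒟 (k + 1) := fun h => hmin (k + 1) (by omega) ⟨_, h, hfl _ _⟩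
    obtain ⟨z₀, hz₀, hrz₀⟩ : ∃ z₀, (2 : ℝ) ^ (k + 1) • z₀ ∈ gridSq (fl (k + 1) z) ∧
        r z₀ < 3 * δ (k + 1) := by
      simp only [𝒟, Set.mem_ofPred_eq] at hc
      push Not at hc
      exact hc
    have d1 := hδs k
    have d2 := hδs (k + 1)
    have hval : ∀ q, dist q z ≤ 3 * δ (k + 1) → φ (ν q) ∈ U ∩ V ∩ V' := fun q hq => by
      refine hφε _ (hνA q) ?_
      have e1 : r q = dist q (ν q) := hν q
      have e2 := dist_triangle4 (ν q) q z a
      rw [dist_comm (ν q) q] at e2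
      linarith [hr q z]
    rw [hPD _ z hm, hS]
    refine hT2 (k + 1) _ U V hUV _ hc (fun q hq => (hval q ?_).1.2) (fun w hw _ => ?_) z (hfl _ _)
    · linarith [hdist _ _ _ _ hq (hfl (k + 1) z), hδ (k + 1)]
    · rw [hS]
      have hwz := hdist _ _ _ _ hw (hfl (k + 1) z)
      have hrw : r w < 4 * δ (k + 1) := by linarith [hr w z₀, hdist _ _ _ _ hw hz₀]
      have hfar : ∀ q, (2 : ℝ) ^ k • q ∈ gridSq (fl k w) → r q < 3 * δ k := fun q hq => by
        linarith [hr q w, hdist _ _ _ _ hq (hfl k w)]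
      refine hT2 k _ V V' hVV' (fl k w) (fun h => ?_) (fun q hq => (hval q ?_).2) (fun q hq hq' => ?_)
        w (hfl _ _)
      · linarith [hfar w (hfl _ _), h w (hfl _ _)]
      · linarith [dist_triangle q w z, hdist _ _ _ _ hq (hfl k w)]
      · linarith [hfar q hq, hD3 k q hq']
  · have hra : 0 < r a := (hA.notMem_iff_infDist_pos hne).1 ha
    obtain ⟨k, hk⟩ := hsmall (r a / 8) (by linarith)
    refine (S k).continuous.continuousAt.congr ?_
    filter_upwards [Metric.ball_mem_nhds a (half_pos hra)] with w hw
    rw [Metric.mem_ball, dist_comm] at hw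
    exact (hPD k w (hD4 k w (by linarith [hr a w]))).symm

/-- If the leaves of a planar lamination join points at which the path `p` agrees, then `p` extends
to a map of the plane that is constant along the two legs over each leaf. -/
lemma exists_lamination_filling {X : Type*} [MetricSpace X] [SimplyConnectedSpace X]
    (hX : LocSimplyConnected X) {a c : ℝ} {R : Set (ℝ × ℝ)} (hne : R.Nonempty)
    (hR : ∀ z ∈ R, a ≤ z.1 ∧ z.1 ≤ z.2 ∧ z.2 ≤ c) {p : ℝ → X} (hp : Continuous p)
    (hpR : ∀ z ∈ R, p z.1 = p z.2)
    (hC : ∀ z ∈ R, ∀ w ∈ R, w.1 < z.1 → z.1 < w.2 → w.2 < z.2 → p z.1 = p w.2) :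
    ∃ P : ℝ × ℝ → X, Continuous P ∧ ∀ z ∈ R, ∀ t, z.1 ≤ t → t ≤ z.2 →
      P (z.1, t) = p z.1 ∧ P (t, z.2) = p z.1 := by
  let R' := closure R
  have hR' : ∀ z ∈ R', a ≤ z.1 ∧ z.1 ≤ z.2 ∧ z.2 ≤ c := closure_minimal hR
    ((isClosed_le continuous_const continuous_fst).inter
      ((isClosed_le continuous_fst continuous_snd).inter
        (isClosed_le continuous_snd continuous_const)))
  have hpR' : ∀ z ∈ R', p z.1 = p z.2 :=
    closure_minimal hpR (isClosed_eq (by fun_prop) (by fun_prop))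
  have hC' : ∀ z ∈ R', ∀ w ∈ R', w.1 < z.1 → z.1 < w.2 → w.2 < z.2 → p z.1 = p w.2 := by
    intro z hz w hw h1 h2 h3
    by_contra h4
    have hzw : (z, w) ∈ closure (R ×ˢ R) := by rw [closure_prod_eq]; exact ⟨hz, hw⟩
    have ho : IsOpen {q : (ℝ × ℝ) × (ℝ × ℝ) | (q.2.1 < q.1.1 ∧ q.1.1 < q.2.2) ∧ q.2.2 < q.1.2 ∧
        p q.1.1 ≠ p q.2.2} := by
      have o1 : IsOpen {q : (ℝ × ℝ) × (ℝ × ℝ) | q.2.1 < q.1.1} :=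
        isOpen_lt (by fun_prop) (by fun_prop)
      have o2 : IsOpen {q : (ℝ × ℝ) × (ℝ × ℝ) | q.1.1 < q.2.2} :=
        isOpen_lt (by fun_prop) (by fun_prop)
      have o3 : IsOpen {q : (ℝ × ℝ) × (ℝ × ℝ) | q.2.2 < q.1.2} :=
        isOpen_lt (by fun_prop) (by fun_prop)
      have o4 : IsOpen {q : (ℝ × ℝ) × (ℝ × ℝ) | p q.1.1 ≠ p q.2.2} :=
        isOpen_ne_fun (by fun_prop) (by fun_prop)
      exact (o1.inter o2).inter (o3.inter o4)
    obtain ⟨q, ⟨⟨k1, k2⟩, k3, k4⟩, kz, kw⟩ := mem_closure_iff.1 hzw _ ho ⟨⟨h1, h2⟩, h3, h4⟩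
    exact k4 (hC _ kz _ kw k1 k2 k3)
  have hcpt : IsCompact R' := (isCompact_Icc.prod isCompact_Icc).of_isClosed_subset isClosed_closure
    (fun z hz => show z ∈ Set.Icc a c ×ˢ Set.Icc a c by
      obtain ⟨h1, h2, h3⟩ := hR' z hz
      exact ⟨⟨h1, h2.trans h3⟩, h1.trans h2, h3⟩)
  have hcpt' := hcpt.prod (isCompact_Icc (a := (0 : ℝ)) (b := 1))
  let Av : Set (ℝ × ℝ) := (fun q : (ℝ × ℝ) × ℝ => (q.1.1, q.1.1 + q.2 * (q.1.2 - q.1.1))) ''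
    (R' ×ˢ Set.Icc 0 1)
  let Ah : Set (ℝ × ℝ) := (fun q : (ℝ × ℝ) × ℝ => (q.1.1 + q.2 * (q.1.2 - q.1.1), q.1.2)) ''
    (R' ×ˢ Set.Icc 0 1)
  have hAv : IsClosed Av := (hcpt'.image (by fun_prop)).isClosed
  have hAh : IsClosed Ah := (hcpt'.image (by fun_prop)).isClosed
  have mAv : ∀ z ∈ Av, ∃ s, (z.1, s) ∈ R' ∧ z.1 ≤ z.2 ∧ z.2 ≤ s := by
    rintro _ ⟨⟨⟨s, s'⟩, τ⟩, ⟨hs, hτ⟩, rfl⟩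
    have := (hR' _ hs).2.1
    exact ⟨s', hs, by simp only at this ⊢; nlinarith [hτ.1], by simp only at this ⊢; nlinarith [hτ.2]⟩
  have mAh : ∀ z ∈ Ah, ∃ s, (s, z.2) ∈ R' ∧ s ≤ z.1 ∧ z.1 ≤ z.2 := by
    rintro _ ⟨⟨⟨s, s'⟩, τ⟩, ⟨hs, hτ⟩, rfl⟩
    have := (hR' _ hs).2.1
    exact ⟨s, hs, by simp only at this ⊢; nlinarith [hτ.1], by simp only at this ⊢; nlinarith [hτ.2]⟩
  have hτ : ∀ s s' t : ℝ, s ≤ t → t ≤ s' → ∃ τ ∈ Set.Icc (0 : ℝ) 1, s + τ * (s' - s) = t := by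
    intro s s' t h1 h2
    rcases (h1.trans h2).eq_or_lt with rfl | h
    · exact ⟨0, ⟨le_rfl, zero_le_one⟩, by linarith⟩
    · refine ⟨(t - s) / (s' - s), ⟨div_nonneg (by linarith) (by linarith),
        (div_le_one (by linarith)).2 (by linarith)⟩, ?_⟩
      rw [div_mul_cancel₀ _ (by linarith)]
      ring
  have hov : ∀ z ∈ Av, z ∈ Ah → p z.1 = p z.2 := by
    rintro ⟨x, y⟩ hv hh
    obtain ⟨s', h1, h2, h3⟩ := mAv _ hv
    obtain ⟨s, k1, k2, -⟩ := mAh _ hh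
    simp only at h1 h2 h3 k1 k2 ⊢
    rcases h2.eq_or_lt with rfl | h2
    · rfl
    rcases h3.eq_or_lt with rfl | h3
    · exact hpR' _ h1
    rcases k2.eq_or_lt with rfl | k2
    · exact hpR' _ k1
    exact hC' _ h1 _ k1 k2 h2 h3
  let φ : ℝ × ℝ → X := fun z => if z ∈ Av then p z.1 else p z.2
  have φv : ∀ z ∈ Av, φ z = p z.1 := fun z hz => if_pos hz
  have φh : ∀ z ∈ Ah, φ z = p z.2 := fun z hz => by
    by_cases h : z ∈ Av
    · rw [φv z h, hov z h hz]
    · exact if_neg h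
  have hφ : ContinuousOn φ (Av ∪ Ah) := ContinuousOn.union_of_isClosed
    (ContinuousOn.congr (f := fun z : ℝ × ℝ => p z.1) (by fun_prop) φv)
    (ContinuousOn.congr (f := fun z : ℝ × ℝ => p z.2) (by fun_prop) φh) hAv hAh
  have inAv : ∀ z ∈ R, ∀ t, z.1 ≤ t → t ≤ z.2 → (z.1, t) ∈ Av := fun z hz t h1 h2 => by
    obtain ⟨τ, hτ, e⟩ := hτ z.1 z.2 t h1 h2
    exact ⟨(z, τ), ⟨subset_closure hz, hτ⟩, Prod.ext rfl e⟩
  have inAh : ∀ z ∈ R, ∀ t, z.1 ≤ t → t ≤ z.2 → (t, z.2) ∈ Ah := fun z hz t h1 h2 => by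
    obtain ⟨τ, hτ, e⟩ := hτ z.1 z.2 t h1 h2
    exact ⟨(z, τ), ⟨subset_closure hz, hτ⟩, Prod.ext e rfl⟩
  obtain ⟨z₀, hz₀⟩ := hne
  obtain ⟨P, hP, hPA⟩ := exists_planar_extension hX (hAv.union hAh)
    ⟨_, Or.inl (inAv z₀ hz₀ _ le_rfl (hR _ hz₀).2.1)⟩ hφ
  refine ⟨P, hP, fun z hz t h1 h2 => ⟨?_, ?_⟩⟩
  · rw [hPA (Or.inl (inAv z hz t h1 h2)), φv _ (inAv z hz t h1 h2)]
  · rw [hPA (Or.inr (inAh z hz t h1 h2)), φh _ (inAh z hz t h1 h2), hpR z hz]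

lemma sort_union_of_lt {ι : Type*} [LinearOrder ι] {A B : Finset ι}
    (h : ∀ a ∈ A, ∀ b ∈ B, a < b) : (A ∪ B).sort (· ≤ ·) = A.sort (· ≤ ·) ++ B.sort (· ≤ ·) := by
  rw [← List.toFinset_append.trans
    (congrArg₂ _ (A.sort_toFinset (· ≤ ·)) (B.sort_toFinset (· ≤ ·))),
    (List.toFinset_sort (· ≤ ·) ?_).2 ?_]
  · rw [List.nodup_append]
    exact ⟨A.sort_nodup _, B.sort_nodup _, fun a ha b hb =>
      (h a ((A.mem_sort _).1 ha) b ((B.mem_sort _).1 hb)).ne⟩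
  · rw [List.pairwise_append]
    exact ⟨A.pairwise_sort _, B.pairwise_sort _, fun a ha b hb =>
      (h a ((A.mem_sort _).1 ha) b ((B.mem_sort _).1 hb)).le⟩

section

variable {D : Type*} (W : InfWord D)

/-- The finite word obtained from `W` by keeping the letters at the positions in `T`, evaluated in
the free group. -/
def InfWord.evalT (T : Finset W.ι) : FreeGroup D :=
  ((T.sort (· ≤ ·)).map fun i => FreeGroup.mk [W.letter i]).prod

/-- The letters at positions `i` and `j` are inverse to each other. -/
def InfWord.Inv (i j : W.ι) : Prop :=
  (W.letter i).1 = (W.letter j).1 ∧ (W.letter i).2 = !(W.letter j).2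

lemma InfWord.evalT_union {A B : Finset W.ι} (h : ∀ a ∈ A, ∀ b ∈ B, a < b) :
    W.evalT (A ∪ B) = W.evalT A * W.evalT B := by
  simp only [InfWord.evalT, sort_union_of_lt h, List.map_append, List.prod_append]

lemma InfWord.evalT_pair {i j : W.ι} (hij : i < j) (h : W.Inv i j) :
    W.evalT ({i} ∪ {j}) = 1 := by
  rw [W.evalT_union (by simpa using hij)]
  simp only [InfWord.evalT, Finset.sort_singleton, List.map_cons, List.map_nil, List.prod_cons,
    List.prod_nil, mul_one]
  have : W.letter i = ((W.letter j).1, !(W.letter j).2) := Prod.ext h.1 h.2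
  rw [this, mul_eq_one_iff_eq_inv, FreeGroup.inv_mk]
  simp [FreeGroup.invRev]

lemma InfWord.evalT_erase_pair {T : Finset W.ι} {i j : W.ι} (hi : i ∈ T) (hj : j ∈ T)
    (hij : i < j) (h : W.Inv i j) (hadj : ∀ k ∈ T, i < k → ¬k < j) :
    W.evalT (T \ {i, j}) = W.evalT T := by
  let A := T.filter (· < i)
  let B := T.filter (j < ·)
  have h1 : T \ {i, j} = A ∪ B := by
    ext k
    simp only [Finset.mem_sdiff, Finset.mem_insert, Finset.mem_singleton, not_or, A, B,
      Finset.mem_union, Finset.mem_filter]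
    constructor
    · rintro ⟨hk, h1, h2⟩
      rcases lt_or_gt_of_ne h1 with h1 | h1
      · exact Or.inl ⟨hk, h1⟩
      · exact Or.inr ⟨hk, (lt_or_gt_of_ne h2).resolve_left (hadj k hk h1)⟩
    · rintro (⟨hk, h1⟩ | ⟨hk, h1⟩)
      · exact ⟨hk, h1.ne, (h1.trans hij).ne⟩
      · exact ⟨hk, (hij.trans h1).ne', h1.ne'⟩
  have h2 : T = A ∪ (({i} ∪ {j}) ∪ B) := by
    rw [← Finset.union_assoc, Finset.union_right_comm, ← h1]
    ext k
    simp only [Finset.mem_union, Finset.mem_sdiff, Finset.mem_insert, Finset.mem_singleton]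
    constructor
    · intro hk; tauto
    · rintro (h | rfl | rfl)
      exacts [h.1, hi, hj]
  have hA : ∀ a ∈ A, a < i := fun a ha => (Finset.mem_filter.1 ha).2
  have hB : ∀ b ∈ B, j < b := fun b hb => (Finset.mem_filter.1 hb).2
  rw [h1, W.evalT_union, h2, W.evalT_union (A := A), W.evalT_union (B := B), W.evalT_pair hij h,
    one_mul]
  · intro a ha b hb
    simp only [Finset.mem_union, Finset.mem_singleton] at ha
    rcases ha with rfl | rfl
    exacts [hij.trans (hB b hb), hB b hb]
  · intro a ha b hb
    simp only [Finset.mem_union, Finset.mem_singleton] at hb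
    rcases hb with (rfl | rfl) | hb
    exacts [hA a ha, (hA a ha).trans hij, (hA a ha).trans (hij.trans (hB b hb))]
  · exact fun a ha b hb => (hA a ha).trans (hij.trans (hB b hb))

lemma InfWord.exists_adjacent_inv {T : Finset W.ι} (hne : T.Nonempty) (h : W.evalT T = 1) :
    ∃ i ∈ T, ∃ j ∈ T, i < j ∧ W.Inv i j ∧ ∀ k ∈ T, i < k → ¬k < j := by
  set l := T.sort (· ≤ ·) with hl
  have hev : ∀ l : List W.ι, (l.map fun i => FreeGroup.mk [W.letter i]).prod =
      FreeGroup.mk (l.map W.letter) := fun l => by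
    induction l with
    | nil => rfl
    | cons a l ih => rw [List.map_cons, List.prod_cons, ih, FreeGroup.mul_mk]; rfl
  have hnr : ¬FreeGroup.IsReduced (l.map W.letter) := fun hr => by
    have h1 : FreeGroup.reduce (l.map W.letter) = [] := by
      rw [← FreeGroup.toWord_mk, ← hev]
      change (W.evalT T).toWord = []
      rw [h, FreeGroup.toWord_one]
    rw [hr.reduce_eq, List.map_eq_nil_iff] at h1
    obtain ⟨x, hx⟩ := hne
    have : x ∈ l := (T.mem_sort _).2 hx
    rw [h1] at this
    simp at this
  rw [FreeGroup.IsReduced, List.isChain_iff_getElem] at hnr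
  push Not at hnr
  obtain ⟨n, hn, h1, h2⟩ := hnr
  rw [List.length_map] at hn
  simp only [List.getElem_map] at h1 h2
  have hs : l.SortedLT := T.sortedLT_sort
  have hmono := hs.strictMono_get
  refine ⟨l[n], (T.mem_sort _).1 (List.getElem_mem _), l[n + 1],
    (T.mem_sort _).1 (List.getElem_mem _), hmono (a := ⟨n, by omega⟩) (b := ⟨n + 1, hn⟩) (by simp),
    ⟨h1, ?_⟩, fun k hk hk1 hk2 => ?_⟩
  · revert h2
    generalize (W.letter l[n]).2 = x
    generalize (W.letter l[n + 1]).2 = y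
    cases x <;> cases y <;> simp
  · obtain ⟨m, hm, rfl⟩ := List.mem_iff_getElem.1 ((T.mem_sort (· ≤ ·)).2 hk)
    have a1 := hmono.lt_iff_lt (a := ⟨n, by omega⟩) (b := ⟨m, hm⟩)
    have a2 := hmono.lt_iff_lt (a := ⟨m, hm⟩) (b := ⟨n + 1, hn⟩)
    have b1 := a1.1 hk1
    have b2 := a2.1 hk2
    simp only [Fin.mk_lt_mk] at b1 b2
    omega

/-- A noncrossing pairing by inverse letters of all the positions in `S`. -/
structure InfWord.CompletePairing (S : Set W.ι) (Γ : Set (W.ι × W.ι)) : Prop where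
  mem : ∀ p ∈ Γ, p.1 ∈ S ∧ p.2 ∈ S
  lt : ∀ p ∈ Γ, p.1 < p.2
  inv : ∀ p ∈ Γ, W.Inv p.1 p.2
  disj : ∀ p ∈ Γ, ∀ q ∈ Γ, p ≠ q → p.1 ≠ q.1 ∧ p.1 ≠ q.2 ∧ p.2 ≠ q.1 ∧ p.2 ≠ q.2
  noncross : ∀ p ∈ Γ, ∀ q ∈ Γ, ¬(p.1 < q.1 ∧ q.1 < p.2 ∧ p.2 < q.2)
  covered : ∀ k ∈ S, ∃ q ∈ Γ, q.1 = k ∨ q.2 = k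

lemma InfWord.exists_completePairing_of_evalT (T : Finset W.ι) (h : W.evalT T = 1) :
    ∃ Γ, W.CompletePairing T Γ := by
  induction T using Finset.strongInduction with
  | H T ih =>
    rcases T.eq_empty_or_nonempty with rfl | hne
    · exact ⟨∅, by simp, by simp, by simp, by simp, by simp, by simp⟩
    obtain ⟨i, hi, j, hj, hij, hinv, hadj⟩ := W.exists_adjacent_inv hne h
    obtain ⟨Γ, hΓ⟩ := ih (T \ {i, j})
      (Finset.ssubset_iff_subset_ne.2 ⟨Finset.sdiff_subset, fun e => by
        rw [← e] at hi; simp at hi⟩)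
      (by rw [W.evalT_erase_pair hi hj hij hinv hadj, h])
    have hm : ∀ p ∈ Γ, (p.1 ∈ T ∧ p.1 ≠ i ∧ p.1 ≠ j) ∧ p.2 ∈ T ∧ p.2 ≠ i ∧ p.2 ≠ j := fun p hp => by
      simpa using hΓ.mem p hp
    refine ⟨insert (i, j) Γ, ?_, ?_, ?_, ?_, ?_, ?_⟩
    · rintro p (rfl | hp)
      exacts [⟨hi, hj⟩, ⟨(hm p hp).1.1, (hm p hp).2.1⟩]
    · rintro p (rfl | hp)
      exacts [hij, hΓ.lt p hp]
    · rintro p (rfl | hp)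
      exacts [hinv, hΓ.inv p hp]
    · rintro p (rfl | hp) q (rfl | hq) hpq
      · exact absurd rfl hpq
      · obtain ⟨⟨-, h1, h2⟩, -, h3, h4⟩ := hm q hq
        exact ⟨h1.symm, h3.symm, h2.symm, h4.symm⟩
      · obtain ⟨⟨-, h1, h2⟩, -, h3, h4⟩ := hm p hp
        exact ⟨h1, h2, h3, h4⟩
      · exact hΓ.disj p hp q hq hpq
    · rintro p (rfl | hp) q (rfl | hq) ⟨h1, h2, h3⟩
      · exact h1.false
      · exact hadj _ (hm q hq).1.1 h1 h2
      · exact hadj _ (hm p hp).2.1 h2 h3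
      · exact hΓ.noncross p hp q hq ⟨h1, h2, h3⟩
    · intro k hk
      by_cases h1 : k = i
      · exact ⟨_, Or.inl rfl, Or.inl h1.symm⟩
      by_cases h2 : k = j
      · exact ⟨_, Or.inl rfl, Or.inr h2.symm⟩
      obtain ⟨q, hq, h⟩ := hΓ.covered k (by simpa [h1, h2] using hk)
      exact ⟨q, Or.inr hq, h⟩

/-- The inclusion of the positions of a subword. -/
def InfWord.incl (S : Set W.ι) : (W.restrict S).ι ↪ W.ι := Function.Embedding.subtype (· ∈ S)

lemma InfWord.evalT_restrict (S : Set W.ι) (T : Finset (W.restrict S).ι) :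
    (W.restrict S).evalT T = W.evalT (T.map (W.incl S)) := by
  have h : (T.sort (· ≤ ·)).map (W.incl S) = (T.map (W.incl S)).sort (· ≤ ·) :=
    Finset.map_sort (W.incl S) T (· ≤ ·) (· ≤ ·) fun a _ b _ => Iff.rfl
  unfold InfWord.evalT
  rw [← h, List.map_map]
  rfl

lemma InfWord.evalF_restrict (S : Set W.ι) (F : Finset D) :
    (W.restrict S).evalF F = W.evalT ((W.finF F).toFinset.filter (· ∈ S)) := by
  refine (W.evalT_restrict S ((W.restrict S).finF F).toFinset).trans (congrArg _ ?_)
  ext i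
  rw [Finset.mem_map, Finset.mem_filter, Set.Finite.mem_toFinset]
  constructor
  · rintro ⟨⟨k, hk⟩, h, rfl⟩
    exact ⟨(((W.restrict S).finF F).mem_toFinset (a := ⟨k, hk⟩)).1 h, hk⟩
  · rintro ⟨h, hk⟩
    exact ⟨⟨i, hk⟩, (((W.restrict S).finF F).mem_toFinset (a := ⟨i, hk⟩)).2 h, rfl⟩

lemma InfWord.exists_completePairing_of_isNull (S : Set W.ι) (h : (W.restrict S).IsNull) :
    ∃ Γ, W.CompletePairing S Γ := by
  choose G hG using fun F => W.exists_completePairing_of_evalT _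
    ((W.evalF_restrict S F).symm.trans (h F))
  let 𝓤 : Ultrafilter (Finset D) := Ultrafilter.of Filter.atTop
  have h𝓤 : (𝓤 : Filter (Finset D)) ≤ Filter.atTop := Ultrafilter.of_le _
  have hmem : ∀ F, ∀ p ∈ G F, p.1 ∈ S ∧ p.2 ∈ S := fun F p hp => by
    have := (hG F).mem p hp
    simp only [Finset.coe_filter, Set.mem_ofPred_eq] at this
    exact ⟨this.1.2, this.2.2⟩
  refine ⟨{p | ∀ᶠ F in 𝓤, p ∈ G F}, fun p hp => ?_, fun p hp => ?_, fun p hp => ?_,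
    fun p hp q hq => ?_, fun p hp q hq => ?_, fun k hk => ?_⟩
  · obtain ⟨F, hF⟩ := Filter.Eventually.exists hp
    exact hmem F p hF
  · obtain ⟨F, hF⟩ := Filter.Eventually.exists hp
    exact (hG F).lt p hF
  · obtain ⟨F, hF⟩ := Filter.Eventually.exists hp
    exact (hG F).inv p hF
  · obtain ⟨F, hF, hF'⟩ := (Filter.Eventually.and hp hq).exists
    exact (hG F).disj p hF q hF'
  · obtain ⟨F, hF, hF'⟩ := (Filter.Eventually.and hp hq).exists
    exact (hG F).noncross p hF q hF'
  · have hfin := W.finOcc (W.letter k).1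
    have hev : ∀ᶠ F in (𝓤 : Filter (Finset D)), ∃ q ∈ {i : W.ι | (W.letter i).1 = (W.letter k).1} ×ˢ
        {i : W.ι | (W.letter i).1 = (W.letter k).1}, (q.1 = k ∨ q.2 = k) ∧ q ∈ G F := by
      filter_upwards [h𝓤 (Filter.mem_atTop {(W.letter k).1})] with F hF
      have hkF : (W.letter k).1 ∈ F := hF (Finset.mem_singleton_self _)
      obtain ⟨q, hq, hqk⟩ := (hG F).covered k (by simpa using ⟨hkF, hk⟩)
      have hi := ((hG F).inv q hq).1
      refine ⟨q, ?_, hqk, hq⟩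
      rcases hqk with rfl | rfl
      · exact ⟨rfl, hi.symm⟩
      · exact ⟨hi, rfl⟩
    obtain ⟨q, -, hq⟩ := (Ultrafilter.eventually_exists_mem_iff (hfin.prod hfin)).1 hev
    exact ⟨q, hq.mono fun F h => h.2, hq.exists.choose_spec.1⟩

end

section

variable {D : Type*} (W : InfWord D)

/-- The positions not matched by the pairing `Γ`. -/
def InfWord.unmatched (Γ : Set (W.ι × W.ι)) : Set W.ι := {i | ∀ p ∈ Γ, p.1 ≠ i ∧ p.2 ≠ i}

lemma InfWord.exists_maximal_pairing : ∃ Γ, Maximal (InfNCIP W) Γ := by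
  refine zorn_subset {Γ | InfNCIP W Γ} fun c hc hchain => ?_
  have hpair : ∀ p ∈ ⋃₀ c, ∀ q ∈ ⋃₀ c, ∃ Γ, InfNCIP W Γ ∧ p ∈ Γ ∧ q ∈ Γ := by
    rintro p ⟨s, hs, hp⟩ q ⟨t, ht, hq⟩
    rcases hchain.total hs ht with h | h
    exacts [⟨t, hc ht, h hp, hq⟩, ⟨s, hc hs, hp, h hq⟩]
  refine ⟨⋃₀ c, ⟨?_, ?_, ?_, ?_, ?_⟩, fun s hs => Set.subset_sUnion_of_mem hs⟩
  · rintro p ⟨s, hs, hp⟩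
    exact (hc hs).lt p hp
  · rintro p ⟨s, hs, hp⟩
    exact (hc hs).inv p hp
  · intro p hp q hq
    obtain ⟨Γ, hΓ, hp, hq⟩ := hpair p hp q hq
    exact hΓ.disj p hp q hq
  · intro p hp q hq
    obtain ⟨Γ, hΓ, hp, hq⟩ := hpair p hp q hq
    exact hΓ.noncross p hp q hq
  · rintro p ⟨s, hs, hp⟩ k h1 h2
    obtain ⟨q, hq, h⟩ := (hc hs).covered p hp k h1 h2
    exact ⟨q, ⟨s, hs, hq⟩, h⟩

variable {W} {Γ : Set (W.ι × W.ι)}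

lemma InfNCIP.notMem_unmatched (hΓ : InfNCIP W Γ) {p : W.ι × W.ι} (hp : p ∈ Γ) {k : W.ι}
    (h1 : p.1 ≤ k) (h2 : k ≤ p.2) : k ∉ W.unmatched Γ := fun h => by
  obtain ⟨q, hq, hk | hk⟩ := hΓ.covered p hp k h1 h2
  exacts [(h q hq).1 hk, (h q hq).2 hk]

lemma reduced_of_maximal (hΓ : Maximal (InfNCIP W) Γ) : (W.restrict (W.unmatched Γ)).Reduced := by
  rintro S ⟨x, hx⟩ hS hnull
  obtain ⟨G, hG⟩ := (W.restrict (W.unmatched Γ)).exists_completePairing_of_isNull S hnull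
  have hN := hΓ.prop
  let e := W.incl (W.unmatched Γ)
  have he : ∀ k, e k ∈ W.unmatched Γ := fun k => k.2
  have hadd : InfNCIP W (Γ ∪ Prod.map e e '' G) := by
    refine ⟨?_, ?_, ?_, ?_, ?_⟩
    · rintro p (hp | ⟨p, hp, rfl⟩)
      exacts [hN.lt p hp, hG.lt p hp]
    · rintro p (hp | ⟨p, hp, rfl⟩)
      exacts [hN.inv p hp, hG.inv p hp]
    · rintro p (hp | ⟨p, hp, rfl⟩) q (hq | ⟨q, hq, rfl⟩) hpq
      · exact hN.disj p hp q hq hpq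
      · exact ⟨(he q.1 p hp).1, (he q.2 p hp).1, (he q.1 p hp).2, (he q.2 p hp).2⟩
      · exact ⟨(he p.1 q hq).1.symm, (he p.1 q hq).2.symm, (he p.2 q hq).1.symm,
          (he p.2 q hq).2.symm⟩
      · obtain ⟨h1, h2, h3, h4⟩ := hG.disj p hp q hq fun h => hpq (by rw [h])
        exact ⟨e.injective.ne h1, e.injective.ne h2, e.injective.ne h3, e.injective.ne h4⟩
    · rintro p (hp | ⟨p, hp, rfl⟩) q (hq | ⟨q, hq, rfl⟩) ⟨h1, h2, h3⟩
      · exact hN.noncross p hp q hq ⟨h1, h2, h3⟩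
      · exact hN.notMem_unmatched hp h1.le h2.le (he q.1)
      · exact hN.notMem_unmatched hq h2.le h3.le (he p.2)
      · exact hG.noncross p hp q hq ⟨h1, h2, h3⟩
    · rintro p (hp | ⟨p, hp, rfl⟩) k h1 h2
      · obtain ⟨q, hq, h⟩ := hN.covered p hp k h1 h2
        exact ⟨q, Or.inl hq, h⟩
      · by_cases hk : k ∈ W.unmatched Γ
        · obtain ⟨q, hq, h⟩ := hG.covered ⟨k, hk⟩
            (hS p.1 (hG.mem p hp).1 p.2 (hG.mem p hp).2 _ h1 h2)
          exact ⟨_, Or.inr ⟨q, hq, rfl⟩, h.imp (congrArg e) (congrArg e)⟩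
        · simp only [InfWord.unmatched, Set.mem_ofPred_eq] at hk
          push Not at hk
          obtain ⟨q, hq, h⟩ := hk
          exact ⟨q, Or.inl hq, or_iff_not_imp_left.2 h⟩
  obtain ⟨q, hq, h⟩ := hG.covered x hx
  have hq' := hΓ.le_of_ge hadd Set.subset_union_left (Or.inr ⟨q, hq, rfl⟩)
  exact (he q.1 _ hq').1 rfl

lemma InfNCIP.evalT_filter_unmatched (hΓ : InfNCIP W Γ) (T : Finset W.ι)
    (hT : ∀ p ∈ Γ, p.1 ∈ T ↔ p.2 ∈ T) :
    W.evalT (T.filter (· ∈ W.unmatched Γ)) = W.evalT T := by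
  induction T using Finset.strongInduction with
  | H T ih =>
    by_cases hex : ∃ p ∈ Γ, p.1 ∈ T
    · obtain ⟨p₀, hp₀, hp₀T⟩ := hex
      obtain ⟨p, hpm, hmin⟩ := Finset.exists_min_image ((T ×ˢ T).filter (· ∈ Γ))
        (fun p => (T.filter fun k => p.1 < k ∧ k < p.2).card)
        ⟨p₀, by simp [hp₀, hp₀T, (hT p₀ hp₀).1 hp₀T]⟩
      simp only [Finset.mem_filter, Finset.mem_product] at hpm hmin
      obtain ⟨⟨hp1, hp2⟩, hp⟩ := hpm
      have hadj : ∀ k ∈ T, p.1 < k → ¬k < p.2 := by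
        intro k hk h1 h2
        have key : ∀ q ∈ Γ, q.1 ∈ T → p.1 < q.1 → q.2 < p.2 → (k = q.1 ∨ k = q.2) → False := by
          intro q hq hqT l1 l2 hkq
          refine (hmin q ⟨⟨hqT, (hT q hq).1 hqT⟩, hq⟩).not_gt (Finset.card_lt_card ?_)
          refine Finset.ssubset_iff_of_subset (fun m hm => ?_) |>.2 ⟨k, ?_, ?_⟩
          · simp only [Finset.mem_filter] at hm ⊢
            exact ⟨hm.1, l1.trans hm.2.1, hm.2.2.trans l2⟩
          · simp [hk, h1, h2]
          · rcases hkq with rfl | rfl <;> simp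
        obtain ⟨q, hq, rfl | rfl⟩ := hΓ.covered p hp k h1.le h2.le
        · have hne : p ≠ q := fun h => h1.ne (by rw [h])
          refine key q hq hk h1 ?_ (Or.inl rfl)
          exact lt_of_le_of_ne (not_lt.1 fun h => hΓ.noncross p hp q hq ⟨h1, h2, h⟩)
            (hΓ.disj p hp q hq hne).2.2.2.symm
        · have hne : p ≠ q := fun h => h2.ne (by rw [h])
          refine key q hq ((hT q hq).2 hk) ?_ h2 (Or.inr rfl)
          exact lt_of_le_of_ne (not_lt.1 fun h => hΓ.noncross q hq p hp ⟨h, h1, h2⟩)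
            (hΓ.disj p hp q hq hne).1
      rw [← W.evalT_erase_pair hp1 hp2 (hΓ.lt p hp) (hΓ.inv p hp) hadj, ← ih (T \ {p.1, p.2})]
      · congr 1
        ext k
        simp only [Finset.mem_filter, Finset.mem_sdiff, Finset.mem_insert, Finset.mem_singleton,
          not_or]
        exact ⟨fun h => ⟨⟨h.1, (h.2 p hp).1.symm, (h.2 p hp).2.symm⟩, h.2⟩,
          fun h => ⟨h.1.1, h.2⟩⟩
      · refine Finset.ssubset_iff_subset_ne.2 ⟨Finset.sdiff_subset, fun e => ?_⟩
        rw [← e] at hp1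
        simp at hp1
      · intro q hq
        simp only [Finset.mem_sdiff, Finset.mem_insert, Finset.mem_singleton, not_or]
        by_cases h : q = p
        · subst h
          simp
        · have := hΓ.disj q hq p hp h
          have := hT q hq
          tauto
    · push Not at hex
      congr 1
      refine Finset.filter_true_of_mem fun k hk p hp => ⟨?_, ?_⟩
      · rintro rfl
        exact hex p hp hk
      · rintro rfl
        exact hex p hp ((hT p hp).2 hk)

lemma InfNCIP.evalF_restrict_unmatched (hΓ : InfNCIP W Γ) (F : Finset D) :
    (W.restrict (W.unmatched Γ)).evalF F = W.evalF F := by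
  rw [W.evalF_restrict]
  refine hΓ.evalT_filter_unmatched _ fun p hp => ?_
  simp [(hΓ.inv p hp).1]

end

lemma wt_apply {X : Type*} {d : ℕ+ → X} (hd : Function.Injective d) (n : ℕ+) : wt d (d n) = 1 / (n : ℝ) := by
  have h : ∃ m : ℕ+, d n = d m := ⟨n, rfl⟩
  rw [wt, dif_pos h, ← hd h.choose_spec]

lemma wt_nonneg {X : Type*} {d : ℕ+ → X} (x : X) : 0 ≤ wt d x := by
  unfold wt
  split_ifs <;> positivity

lemma wt_of_not_exists {X : Type*} {d : ℕ+ → X} {x : X} (h : ¬∃ n : ℕ+, x = d n) : wt d x = 0 := dif_neg h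

section

variable {X : Type*} [MetricSpace X] {d : ℕ+ → X}

lemma rho_self (p : X × Circle) : rho d p p = 0 := by
  unfold rho
  split_ifs with h
  · simp
  · rw [wt_of_not_exists fun h' => h ⟨rfl, h'⟩]
    simp

lemma dist_fst_le_rho (p q : X × Circle) : dist p.1 q.1 ≤ rho d p q := by
  have hp := mul_nonneg (wt_nonneg (d := d) p.1) (dist_nonneg (x := p.2) (y := 1))
  have hq := mul_nonneg (wt_nonneg (d := d) q.1) (dist_nonneg (x := q.2) (y := 1))
  have h := mul_nonneg (wt_nonneg (d := d) p.1) (dist_nonneg (x := p.2) (y := q.2))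
  unfold rho
  split_ifs with h'
  · rwa [h'.1, dist_self, ← h'.1]
  · linarith

lemma rho_triangle (p q r : X × Circle) : rho d p r ≤ rho d p q + rho d q r := by
  have wp := wt_nonneg (d := d) p.1
  have wq := wt_nonneg (d := d) q.1
  have wr := wt_nonneg (d := d) r.1
  have m : ∀ (x : X) (s t v : Circle),
      wt d x * dist s v ≤ wt d x * dist s t + wt d x * dist t v := fun x s t v => by
    rw [← mul_add]
    exact mul_le_mul_of_nonneg_left (dist_triangle _ _ _) (wt_nonneg x)
  have hp := mul_nonneg wp (dist_nonneg (x := p.2) (y := 1))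
  have hq := mul_nonneg wq (dist_nonneg (x := q.2) (y := 1))
  have hr := mul_nonneg wr (dist_nonneg (x := r.2) (y := 1))
  have t1 := dist_triangle p.1 q.1 r.1
  have d1 := dist_nonneg (x := p.1) (y := q.1)
  have d2 := dist_nonneg (x := q.1) (y := r.1)
  have e1 := m p.1 p.2 1 r.2
  rw [dist_comm 1 r.2] at e1
  have e2 := m p.1 p.2 q.2 r.2
  have e3 := m p.1 p.2 q.2 1
  have e4 := m q.1 r.2 q.2 1
  rw [dist_comm r.2 q.2] at e4
  unfold rho
  by_cases h1 : p.1 = q.1 ∧ ∃ n : ℕ+, p.1 = d n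
  · rw [if_pos h1]
    by_cases h2 : q.1 = r.1 ∧ ∃ n : ℕ+, q.1 = d n
    · rw [if_pos h2, if_pos ⟨h1.1.trans h2.1, h1.2⟩, ← h1.1]
      exact e2
    · rw [if_neg h2, if_neg fun h => h2 ⟨h1.1.symm.trans h.1, h1.1 ▸ h1.2⟩, ← h1.1]
      linarith
  · rw [if_neg h1]
    by_cases h2 : q.1 = r.1 ∧ ∃ n : ℕ+, q.1 = d n
    · rw [if_pos h2, if_neg fun h => h1 ⟨h.1.trans h2.1.symm, h.2⟩, ← h2.1]
      linarith
    · rw [if_neg h2]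
      split_ifs with h3
      · rw [← h3.1]
        rw [← h3.1] at t1 d2
        linarith
      · linarith

lemma continuous_pt_fst : Continuous fun p : ESp X d => p.pt.1 := by
  refine continuous_iff_continuousAt.2 fun p => Metric.tendsto_nhds.2 fun r hr => ?_
  have ho : IsOpen {q : ESp X d | rho d p.pt q.pt < r} :=
    TopologicalSpace.isOpen_generateFrom_of_mem ⟨p, r, rfl⟩
  have hmem : p ∈ {q : ESp X d | rho d p.pt q.pt < r} := by
    change rho d p.pt p.pt < r
    rwa [rho_self]
  filter_upwards [ho.mem_nhds hmem] with q hq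
  rw [dist_comm]
  exact (dist_fst_le_rho _ _).trans_lt hq

lemma continuousOn_of_rho {Z : Type*} [TopologicalSpace Z] {F : Z → ESp X d} {S : Set Z}
    (h : ∀ z ∈ S, ∀ ε > 0, ∀ᶠ w in 𝓝[S] z, rho d (F z).pt (F w).pt < ε) : ContinuousOn F S := by
  intro z hz
  refine TopologicalSpace.tendsto_nhds_generateFrom_iff.2 ?_
  rintro _ ⟨p, r, rfl⟩ hp
  filter_upwards [h z hz (r - rho d p.pt (F z).pt) (sub_pos.2 hp)] with w hw
  change rho d p.pt (F w).pt < r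
  linarith [rho_triangle (d := d) p.pt (F z).pt (F w).pt]

/-- The point of `E(X,D)` over `x` whose position on the circle attached at `d n` is `ψ n`. -/
def mkE (d : ℕ+ → X) (x : X) (ψ : ℕ+ → Circle) : ESp X d :=
  ⟨(x, if h : ∃ n, x = d n then ψ h.choose else 1), by
    by_cases h : ∃ n, x = d n
    exacts [Or.inr h, Or.inl (dif_neg h)]⟩

lemma mkE_apply (hd : Function.Injective d) (n : ℕ+) (ψ : ℕ+ → Circle) :
    (mkE d (d n) ψ).pt = (d n, ψ n) := by
  have h : ∃ m : ℕ+, d n = d m := ⟨n, rfl⟩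
  refine Prod.ext rfl ?_
  change (if h : ∃ m, d n = d m then ψ h.choose else 1) = ψ n
  rw [dif_pos h, ← hd h.choose_spec]

lemma mkE_of_not_exists {x : X} (h : ¬∃ n, x = d n) (ψ : ℕ+ → Circle) :
    (mkE d x ψ).pt = (x, 1) := Prod.ext rfl (dif_neg h)

lemma continuousOn_mkE (hd : Function.Injective d) {Z : Type*} [TopologicalSpace Z] {S : Set Z}
    {P : Z → X} {ψ : Z → ℕ+ → Circle} (hP : ContinuousOn P S)
    (hψ : ∀ n, ContinuousOn (fun z => ψ z n) S) (h1 : ∀ z ∈ S, ∀ n, ψ z n ≠ 1 → P z = d n) :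
    ContinuousOn (fun z => mkE d (P z) (ψ z)) S := by
  refine continuousOn_of_rho fun z hz ε hε => ?_
  obtain ⟨M, hM⟩ := exists_nat_gt (8 / ε)
  have hM0 : (0 : ℝ) < M := lt_of_le_of_lt (by positivity) hM
  have hMε : 2 / (M : ℝ) ≤ ε / 4 := by
    rw [div_lt_iff₀ hε] at hM
    rw [div_le_iff₀ hM0]
    linarith
  have hsmall : ∀ (n : ℕ+) (η : ℝ), 0 ≤ η → η ≤ 2 → ((n : ℕ) ≤ M → η ≤ ε / 4) →
      1 / (n : ℝ) * η ≤ ε / 4 := by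
    intro n η h0 h2 h
    have hn : (1 : ℝ) ≤ n := by exact_mod_cast one_le (a := n)
    rw [one_div, inv_mul_eq_div]
    by_cases hnM : (n : ℕ) ≤ M
    · exact (div_le_self h0 hn).trans (h hnM)
    · refine le_trans (div_le_div₀ zero_le_two h2 hM0 ?_) hMε
      exact_mod_cast (not_le.1 hnM).le
  have hd2 : ∀ s t : Circle, dist s t ≤ 2 := fun s t => by
    have := dist_triangle_right (s : ℂ) t 0
    simp only [dist_zero_right, Circle.norm_coe] at this
    change dist (s : ℂ) t ≤ 2
    linarith
  have hev : ∀ᶠ w in 𝓝[S] z, ∀ n : ℕ+, (n : ℕ) ≤ M → dist (ψ z n) (ψ w n) < ε / 4 := by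
    have hfin : {n : ℕ+ | (n : ℕ) ≤ M}.Finite :=
      (Set.finite_Iic M).preimage (PNat.coe_injective.injOn)
    refine (Filter.eventually_all_finite hfin).2 fun n _ => ?_
    simp only [dist_comm (ψ z n)]
    exact Metric.tendsto_nhds.1 (hψ n z hz) (ε / 4) (by positivity)
  filter_upwards [hev, Metric.tendsto_nhds.1 (hP z hz) (ε / 4) (by positivity),
    self_mem_nhdsWithin] with w hw hPw hwS
  rw [dist_comm] at hPw
  have hone : ∀ z w : Z, z ∈ S → w ∈ S → (∀ n : ℕ+, (n : ℕ) ≤ M → dist (ψ z n) (ψ w n) < ε / 4) →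
      P z ≠ P w → wt d (P z) * dist (mkE d (P z) (ψ z)).pt.2 1 ≤ ε / 4 := by
    intro z w hz hwS hw hne
    by_cases hx : ∃ n, P z = d n
    · obtain ⟨n, hn⟩ := hx
      rw [hn, wt_apply hd, mkE_apply hd]
      refine hsmall n _ dist_nonneg (hd2 _ _) fun hnM => ?_
      have h2 : ψ w n = 1 := by
        by_contra h
        exact hne (hn.trans (h1 w hwS n h).symm)
      rw [← h2]
      exact (hw n hnM).le
    · rw [wt_of_not_exists hx, zero_mul]
      positivity
  unfold rho
  change (if P z = P w ∧ ∃ n, P z = d n then _ else dist (P z) (P w) + _ + _) < ε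
  by_cases h : P z = P w
  · by_cases hx : ∃ n, P z = d n
    · rw [if_pos ⟨h, hx⟩]
      obtain ⟨n, hn⟩ := hx
      have hn' : P w = d n := h ▸ hn
      rw [hn', hn, mkE_apply hd, mkE_apply hd]
      change wt d (d n) * dist (ψ z n) (ψ w n) < ε
      rw [wt_apply hd]
      linarith [hsmall n _ dist_nonneg (hd2 (ψ z n) (ψ w n)) fun hnM => (hw n hnM).le]
    · rw [if_neg fun h => hx h.2]
      change dist (P z) (P w) + wt d (P z) * _ + wt d (P w) * _ < ε
      rw [← h, wt_of_not_exists hx, dist_self]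
      linarith
  · rw [if_neg fun h' => h h'.1]
    change dist (P z) (P w) + wt d (P z) * _ + wt d (P w) * _ < ε
    linarith [hone z w hz hwS hw h, hone w z hwS hz
      (fun n hn => by rw [dist_comm]; exact hw n hn) (Ne.symm h)]

end

section

variable {X : Type*} [MetricSpace X] {d : ℕ+ → X}

/-- The planar map guiding the homotopy: it collapses the pairs of intervals matched by `Γ` and
doubles the path back along the unmatched ones. -/
lemma exists_cancelling_map [SimplyConnectedSpace X] (hX : LocSimplyConnected X) {a b : ℝ}
    (hab : a ≤ b) {W : InfWord ℕ+} {u v : W.ι → ℝ}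
    (hI : ∀ i, a ≤ u i ∧ u i < v i ∧ v i ≤ b) (hord : ∀ i j, i < j → v i ≤ u j)
    {q : ℝ → X} (hq : ContinuousOn q (Set.Icc a b))
    (hqd : ∀ i, ∀ s ∈ Set.Icc (u i) (v i), q s = d (W.letter i).1)
    {Γ : Set (W.ι × W.ι)} (hΓ : InfNCIP W Γ) :
    ∃ P : ℝ × ℝ → X, Continuous P ∧
      (∀ s ∈ Set.Icc a b, P (s, s) = q s ∧ P (2 * b - s, 2 * b - s) = q s) ∧
      (∀ s ∈ Set.Icc a b, (s = a ∨ ∃ k ∈ W.unmatched Γ, s ∈ Set.Icc (u k) (v k)) →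
        ∀ t, s ≤ t → t ≤ 2 * b - s → P (s, t) = q s ∧ P (t, 2 * b - s) = q s) ∧
      ∀ γ ∈ Γ, ∀ x ∈ Set.Icc (u γ.1) (v γ.1), ∀ y ∈ Set.Icc (u γ.2) (v γ.2), ∀ t, x ≤ t → t ≤ y →
        P (x, t) = d (W.letter γ.1).1 ∧ P (t, y) = d (W.letter γ.1).1 := by
  let fold : ℝ → ℝ := fun s => max a (min s (2 * b - s))
  have hfold : ∀ s ∈ Set.Icc a b, fold s = s := fun s hs => by
    simp only [fold]
    rw [min_eq_left (by linarith [hs.2]), max_eq_right hs.1]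
  have hfold' : ∀ s, fold (2 * b - s) = fold s := fun s => by
    simp only [fold, sub_sub_cancel]
    rw [min_comm]
  have hfold_mem : ∀ s, fold s ∈ Set.Icc a b := fun s =>
    ⟨le_max_left _ _, max_le hab (by rcases le_total s b with h | h
                                     exacts [(min_le_left _ _).trans h,
                                       (min_le_right _ _).trans (by linarith)])⟩
  let p : ℝ → X := fun s => q (fold s)
  have hp : Continuous p := hq.comp_continuous (by fun_prop) hfold_mem
  have hpq : ∀ s ∈ Set.Icc a b, p s = q s := fun s hs => congrArg q (hfold s hs)
  have hp' : ∀ s, p (2 * b - s) = p s := fun s => congrArg q (hfold' s)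
  have hIcc : ∀ i, ∀ s ∈ Set.Icc (u i) (v i), s ∈ Set.Icc a b := fun i s hs =>
    ⟨(hI i).1.trans hs.1, hs.2.trans (hI i).2.2⟩
  have hpd : ∀ i, ∀ s ∈ Set.Icc (u i) (v i), p s = d (W.letter i).1 := fun i s hs => by
    rw [hpq s (hIcc i s hs), hqd i s hs]
  have hle : ∀ i j, ∀ s ∈ Set.Icc (u i) (v i), ∀ t ∈ Set.Icc (u j) (v j), s < t → i ≤ j :=
    fun i j s hs t ht hst => not_lt.1 fun h => by linarith [hord j i h, hs.1, ht.2]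
  let M : Set (ℝ × ℝ) := {z | z.2 = 2 * b - z.1 ∧
    (z.1 = a ∨ ∃ k ∈ W.unmatched Γ, z.1 ∈ Set.Icc (u k) (v k))}
  let G : Set (ℝ × ℝ) := {z | ∃ γ ∈ Γ, z.1 ∈ Set.Icc (u γ.1) (v γ.1) ∧
    z.2 ∈ Set.Icc (u γ.2) (v γ.2)}
  let R : Set (ℝ × ℝ) := {z | (a ≤ z.1 ∧ z.1 ≤ z.2 ∧ z.2 ≤ 2 * b - a) ∧
    (z.1 = z.2 ∨ z ∈ M ∨ z ∈ G)}
  obtain ⟨P, hP, hPR⟩ := exists_lamination_filling hX (a := a) (c := 2 * b - a) (R := R)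
    ⟨(a, a), ⟨le_rfl, le_rfl, by simp only; linarith⟩, Or.inl rfl⟩ (fun z hz => hz.1) hp
    (by
      rintro z ⟨-, h | ⟨h, -⟩ | ⟨γ, hγ, h1, h2⟩⟩
      · rw [h]
      · rw [h, hp']
      · rw [hpd _ _ h1, hpd _ _ h2, (hΓ.inv γ hγ).1])
    (by
      rintro z ⟨hz0, hz⟩ w ⟨hw0, hw⟩ h1 h2 h3
      rcases hw with hw | hw | ⟨r, hr, w1, w2⟩
      · linarith
      · exfalso
        rcases hz with hz | hz | ⟨q, hq, z1, z2⟩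
        · linarith
        · linarith [hw.1, hz.1]
        · linarith [hw.1, z2.2, (hI q.2).2.2]
      · rcases hz with hz | ⟨-, hz | ⟨k, hk, hz⟩⟩ | ⟨q, hq, z1, z2⟩
        · linarith
        · linarith
        · exact absurd hk (hΓ.notMem_unmatched hr (hle _ _ _ w1 _ hz h1) (hle _ _ _ hz _ w2 h2))
        · by_cases hqr : r = q
          · rw [hpd _ _ z1, hpd _ _ w2, hqr, (hΓ.inv q hq).1]
          · obtain ⟨e1, -, e3, e4⟩ := hΓ.disj r hr q hq hqr
            exact absurd ⟨lt_of_le_of_ne (hle _ _ _ w1 _ z1 h1) e1,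
              lt_of_le_of_ne (hle _ _ _ z1 _ w2 h2) e3.symm,
              lt_of_le_of_ne (hle _ _ _ w2 _ z2 h3) e4⟩ (hΓ.noncross r hr q hq))
  refine ⟨P, hP, fun s hs => ⟨?_, ?_⟩, fun s hs h t h1 h2 => ?_, fun γ hγ x hx y hy t h1 h2 => ?_⟩
  · rw [← hpq s hs]
    exact (hPR (s, s) ⟨⟨hs.1, le_rfl, by simp only; linarith [hs.1, hs.2]⟩, Or.inl rfl⟩ s
      le_rfl le_rfl).1
  · rw [← hpq s hs, ← hp']
    exact (hPR (2 * b - s, 2 * b - s) ⟨⟨by simp only; linarith [hs.1, hs.2], le_rfl,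
      by simp only; linarith [hs.1]⟩, Or.inl rfl⟩ _ le_rfl le_rfl).1
  · rw [← hpq s hs]
    exact hPR (s, 2 * b - s) ⟨⟨hs.1, h1.trans h2, by simp only; linarith [hs.1]⟩,
      Or.inr (Or.inl ⟨rfl, h⟩)⟩ t h1 h2
  · rw [← hpd γ.1 x hx]
    exact hPR (x, y) ⟨⟨(hIcc _ _ hx).1, h1.trans h2, by
      simp only; linarith [(hIcc _ _ hy).2]⟩, Or.inr (Or.inr ⟨γ, hγ, hx, hy⟩)⟩ t h1 h2

/-- `α` increases continuously from `0` before `u` to `1` after `v`. -/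
structure IsRamp (α : ℝ → ℝ) (u v : ℝ) : Prop where
  continuous : Continuous α
  monotone : Monotone α
  eq_zero : ∀ s ≤ u, α s = 0
  eq_one : ∀ s, v ≤ s → α s = 1

lemma IsRamp.nonneg {α : ℝ → ℝ} {u v : ℝ} (h : IsRamp α u v) (s : ℝ) : 0 ≤ α s := by
  rw [← h.eq_zero _ (min_le_right s u)]
  exact h.monotone (min_le_left _ _)

lemma IsRamp.le_one {α : ℝ → ℝ} {u v : ℝ} (h : IsRamp α u v) (s : ℝ) : α s ≤ 1 := by
  rw [← h.eq_one _ (le_max_right s v)]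
  exact h.monotone (le_max_left _ _)

/-- The point of the circle at the fraction `x` of the winding, or reverse winding according to
the sign `l`. -/
def phase (l : Bool) (x : ℝ) : Circle := Circle.exp ((if l then 1 else -1) * (2 * Real.pi * x))

lemma continuous_phase (l : Bool) : Continuous (phase l) := by
  unfold phase
  fun_prop

lemma phase_zero (l : Bool) : phase l 0 = 1 := by
  simp [phase]

lemma phase_one (l : Bool) : phase l 1 = 1 := by
  cases l <;> simp [phase, Circle.exp_neg]

lemma phase_one_sub (l : Bool) (x : ℝ) : phase (!l) (1 - x) = phase l x := by
  cases l
  · have h : (1 : ℝ) * (2 * Real.pi * (1 - x)) = 2 * Real.pi + -1 * (2 * Real.pi * x) := by ring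
    simp only [phase, Bool.not_false, if_true, Bool.false_eq_true, if_false]
    rw [h, Circle.exp_add, Circle.exp_two_pi, one_mul]
  · have h : -1 * (2 * Real.pi * (1 - x)) = -(2 * Real.pi) + 1 * (2 * Real.pi * x) := by ring
    simp only [phase, Bool.not_true, if_true, Bool.false_eq_true, if_false]
    rw [h, Circle.exp_add, Circle.exp_neg, Circle.exp_two_pi, inv_one, one_mul]

lemma IsRamp.phase_eq_one {α : ℝ → ℝ} {u v : ℝ} (h : IsRamp α u v) (l : Bool) {s : ℝ}
    (hs : s ∉ Set.Ioo u v) : phase l (α s) = 1 := by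
  rcases le_or_gt s u with h1 | h1
  · rw [h.eq_zero s h1, phase_zero]
  · rw [h.eq_one s (not_lt.1 fun h2 => hs ⟨h1, h2⟩), phase_one]

lemma Realizes.exists_ramp {f : ℝ → ESp X d} {a b : ℝ} {W : InfWord ℕ+} {u v : W.ι → ℝ}
    (h : Realizes d f a b W u v) (i : W.ι) :
    ∃ α : ℝ → ℝ, IsRamp α (u i) (v i) ∧ ∀ t ∈ Set.Icc (u i) (v i),
      (f t).pt = (d (W.letter i).1, phase (W.letter i).2 (α t)) := by
  have huv : u i ≤ v i := (h.1 i).2.1.le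
  obtain ⟨φ, hc, hm, h0, h1, hf⟩ : ∃ φ : ℝ → ℝ, ContinuousOn φ (Set.Icc (u i) (v i)) ∧
      MonotoneOn φ (Set.Icc (u i) (v i)) ∧ φ (u i) = 0 ∧ φ (v i) = 1 ∧
      ∀ t ∈ Set.Icc (u i) (v i), (f t).pt = (d (W.letter i).1,
        Circle.exp ((if (W.letter i).2 then 1 else -1) * (2 * Real.pi * φ t))) := by
    have hw := h.2.2.1 i
    split_ifs at hw ⊢ with hl
    · obtain ⟨φ, hc, hm, h0, h1, hf⟩ := hw
      exact ⟨φ, hc, hm, h0, h1, fun t ht => by rw [hf t ht, one_mul]⟩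
    · obtain ⟨φ, hc, hm, h0, h1, hf⟩ := hw
      exact ⟨φ, hc, hm, h0, h1, fun t ht => by rw [hf t ht, neg_one_mul, neg_mul]⟩
  refine ⟨Set.IccExtend huv (Set.domRestrict _ φ), ⟨hc.domRestrict.Icc_extend', ?_, fun s hs => ?_,
    fun s hs => ?_⟩, fun t ht => ?_⟩
  · exact Monotone.IccExtend _ fun x y hxy => hm x.2 y.2 hxy
  · rw [Set.IccExtend_of_le_left _ _ hs]
    exact h0
  · rw [Set.IccExtend_of_right_le _ _ hs]
    exact h1
  · rw [Set.IccExtend_of_mem _ _ ht]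
    exact hf t ht

lemma ESp.ext_pt {p q : ESp X d} (h : p.pt = q.pt) : p = q := by
  cases p
  cases q
  cases h
  rfl

lemma mkE_of_forall_eq_one (hd : Function.Injective d) (x : X) {ψ : ℕ+ → Circle}
    (h : ∀ n, ψ n = 1) : (mkE d x ψ).pt = (x, 1) := by
  by_cases hx : ∃ n, x = d n
  · obtain ⟨n, rfl⟩ := hx
    rw [mkE_apply hd, h]
  · exact mkE_of_not_exists hx ψ

end

section

variable {X : Type*} [MetricSpace X] {d : ℕ+ → X}

lemma Realizes.isProper {f : ℝ → ESp X d} {a b : ℝ} {W : InfWord ℕ+} {u v : W.ι → ℝ}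
    (h : Realizes d f a b W u v) (hab : a ≤ b) (hf : ContinuousOn f (Set.Icc a b)) :
    IsProper d f a b := by
  obtain ⟨hI, hord, hw, hX⟩ := h
  refine ⟨hf, (hX a ⟨le_rfl, hab⟩).2 fun i hi => (hI i).1.not_gt hi.1,
    (hX b ⟨hab, le_rfl⟩).2 fun i hi => (hI i).2.2.not_gt hi.2, ?_⟩
  intro x y hax hxy hyb hfx hfy hout _
  have hm : (x + y) / 2 ∈ Set.Ioo x y := ⟨by linarith, by linarith⟩
  have hk := hout _ hm
  rw [hX _ ⟨hax.trans hm.1.le, hm.2.le.trans hyb⟩] at hk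
  push Not at hk
  obtain ⟨k, hk⟩ := hk
  obtain ⟨h1, h2, h3⟩ := hI k
  have hend : ∀ s, s = u k ∨ s = v k → s ∈ Set.Icc a b → InX (f s) := by
    intro s hs hsab
    refine (hX s hsab).2 fun i hi => ?_
    rcases lt_trichotomy i k with hik | rfl | hik
    · have := hord i k hik
      rcases hs with rfl | rfl <;> linarith [hi.2]
    · rcases hs with rfl | rfl
      exacts [lt_irrefl _ hi.1, lt_irrefl _ hi.2]
    · have := hord k i hik
      rcases hs with rfl | rfl <;> linarith [hi.1]
  have hux : u k ≤ x := not_lt.1 fun h => hout (u k) ⟨h, hk.1.trans hm.2⟩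
    (hend _ (Or.inl rfl) ⟨h1, h2.le.trans h3⟩)
  have hyv : y ≤ v k := not_lt.1 fun h => hout (v k) ⟨hm.1.trans hk.2, h⟩
    (hend _ (Or.inr rfl) ⟨h1.trans h2.le, h3⟩)
  have hxu : x ≤ u k := not_lt.1 fun h =>
    (hX x ⟨hax, hxy.le.trans hyb⟩).1 hfx k ⟨h, hxy.trans_le hyv⟩
  have hvy : v k ≤ y := not_lt.1 fun h =>
    (hX y ⟨hax.trans hxy.le, hyb⟩).1 hfy k ⟨hux.trans_lt hxy, h⟩
  rw [le_antisymm hxu hux, le_antisymm hyv hvy]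
  refine ⟨(W.letter k).1, ?_⟩
  have := hw k
  split_ifs at this
  exacts [Or.inl this, Or.inr this]

lemma Realizes.restrict {f g : ℝ → ESp X d} {a b : ℝ} {W : InfWord ℕ+} {u v : W.ι → ℝ}
    (h : Realizes d f a b W u v) (S : Set W.ι)
    (hS : ∀ k ∈ S, ∀ s ∈ Set.Icc (u k) (v k), g s = f s)
    (hX : ∀ s ∈ Set.Icc a b, (∀ k ∈ S, s ∉ Set.Ioo (u k) (v k)) → InX (g s)) :
    Realizes d g a b (W.restrict S) (fun i => u i.1) (fun i => v i.1) := by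
  obtain ⟨hI, hord, hw, hf⟩ := h
  refine ⟨fun i => hI i.1, fun i j hij => hord i.1 j.1 hij, fun i => ?_, fun t ht => ⟨?_, ?_⟩⟩
  · have hi := hw i.1
    change if (W.letter i.1).2 then IsWinding d g (u i.1) (v i.1) (W.letter i.1).1
      else IsRevWinding d g (u i.1) (v i.1) (W.letter i.1).1
    split_ifs at hi ⊢
    · obtain ⟨φ, hc, hm, h0, h1, hφ⟩ := hi
      exact ⟨φ, hc, hm, h0, h1, fun t ht => by rw [hS i.1 i.2 t ht, hφ t ht]⟩
    · obtain ⟨φ, hc, hm, h0, h1, hφ⟩ := hi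
      exact ⟨φ, hc, hm, h0, h1, fun t ht => by rw [hS i.1 i.2 t ht, hφ t ht]⟩
  · intro hg i hi
    rw [hS i.1 i.2 t ⟨hi.1.le, hi.2.le⟩, hf t ht] at hg
    exact hg i.1 hi
  · exact fun h => hX t ht fun k hk => h ⟨k, hk⟩

/-- A path can be deformed by cancelling the windings matched by `Γ` while keeping the others. -/
lemma Realizes.exists_cancelling_homotopy [SimplyConnectedSpace X] (hX : LocSimplyConnected X)
    (hd : Function.Injective d) {f : ℝ → ESp X d} {a b : ℝ} (hab : a ≤ b)
    (hf : ContinuousOn f (Set.Icc a b)) {W : InfWord ℕ+} {u v : W.ι → ℝ}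
    (h : Realizes d f a b W u v) {Γ : Set (W.ι × W.ι)} (hΓ : InfNCIP W Γ) :
    ∃ H : ℝ × ℝ → ESp X d, ContinuousOn H (Set.Icc a b ×ˢ Set.Icc (0 : ℝ) 1) ∧
      (∀ s ∈ Set.Icc a b, H (s, 0) = f s) ∧
      (∀ t ∈ Set.Icc (0 : ℝ) 1, H (a, t) = f a ∧ H (b, t) = f b) ∧
      (∀ k ∈ W.unmatched Γ, ∀ s ∈ Set.Icc (u k) (v k), H (s, 1) = f s) ∧
      ∀ s ∈ Set.Icc a b, (∀ k ∈ W.unmatched Γ, s ∉ Set.Ioo (u k) (v k)) → InX (H (s, 1)) := by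
  choose α hα hfα using h.exists_ramp
  obtain ⟨hI, hord, -, hfX⟩ := h
  let q : ℝ → X := fun s => (f s).pt.1
  have hq : ContinuousOn q (Set.Icc a b) := continuous_pt_fst.comp_continuousOn hf
  have hqd : ∀ i, ∀ s ∈ Set.Icc (u i) (v i), q s = d (W.letter i).1 := fun i s hs =>
    congrArg Prod.fst (hfα i s hs)
  obtain ⟨P, hP, hPd, hPM, hPG⟩ := exists_cancelling_map hX hab hI hord hq hqd hΓ
  let θ : W.ι → ℝ → Circle := fun k s => phase (W.letter k).2 (α k s)
  let Θ : W.ι × W.ι → ℝ × ℝ → Circle := fun γ z =>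
    phase (W.letter γ.1).2 (min (α γ.1 z.1) (1 - α γ.2 z.2))
  have hθ : ∀ k s, s ∉ Set.Ioo (u k) (v k) → θ k s = 1 := fun k s hs => (hα k).phase_eq_one _ hs
  have hΘ : ∀ γ z, Θ γ z ≠ 1 → (u γ.1 < z.1 ∧ z.2 < v γ.2) ∧ (z.1 < v γ.1 ∨ u γ.2 < z.2) := by
    intro γ z hz
    refine ⟨⟨?_, ?_⟩, ?_⟩ <;> by_contra hc <;> refine hz ?_ <;> simp only [Θ]
    · rw [(hα γ.1).eq_zero _ (not_lt.1 hc), min_eq_left (sub_nonneg.2 ((hα _).le_one _)),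
        phase_zero]
    · rw [(hα γ.2).eq_one _ (not_lt.1 hc), sub_self, min_eq_right ((hα _).nonneg _), phase_zero]
    · push Not at hc
      rw [(hα γ.1).eq_one _ hc.1, (hα γ.2).eq_zero _ hc.2, sub_zero, min_self, phase_one]
  have hΘd : ∀ γ ∈ Γ, ∀ s, Θ γ (s, s) = θ γ.1 s * θ γ.2 s := by
    intro γ hγ s
    have hvu := hord _ _ (hΓ.lt γ hγ)
    simp only [Θ, θ]
    rcases le_total s (u γ.2) with hs | hs
    · rw [(hα γ.2).eq_zero s hs, sub_zero, min_eq_left ((hα _).le_one _), phase_zero, mul_one]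
    · rw [(hα γ.1).eq_one s (hvu.trans hs), min_eq_right (sub_le_self _ ((hα _).nonneg _)),
        (hΓ.inv γ hγ).2, phase_one_sub, phase_one, one_mul]
  let E : ℕ+ → Finset W.ι := fun n => (W.finOcc n).toFinset
  have hE : ∀ {n k}, k ∈ E n ↔ (W.letter k).1 = n := fun {n k} => Set.Finite.mem_toFinset _
  let Φ : ℝ × ℝ → ℝ → ℕ+ → Circle := fun z s n =>
    (∏ γ ∈ (E n ×ˢ E n).filter (· ∈ Γ), Θ γ z) * ∏ k ∈ (E n).filter (· ∈ W.unmatched Γ), θ k s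
  let r : ℝ × ℝ → ℝ × ℝ := fun z => (z.1 + max (2 * z.2 - 1) 0 * (2 * (b - z.1)),
    z.1 + min (2 * z.2) 1 * (2 * (b - z.1)))
  have hr0 : ∀ s, r (s, 0) = (s, s) := fun s => by simp [r]
  have hr1 : ∀ s, r (s, 1) = (2 * b - s, 2 * b - s) := fun s => by
    norm_num [r]
    ring
  have hr : ∀ s ≤ b, ∀ t ∈ Set.Icc (0 : ℝ) 1,
      ((r (s, t)).1 = s ∨ (r (s, t)).2 = 2 * b - s) ∧ s ≤ (r (s, t)).1 ∧
        (r (s, t)).1 ≤ (r (s, t)).2 ∧ (r (s, t)).2 ≤ 2 * b - s := by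
    intro s hs t ht
    simp only [r]
    rcases le_total (2 * t) 1 with h1 | h1
    · rw [max_eq_right (by linarith), min_eq_left h1]
      refine ⟨Or.inl (by ring), ?_, ?_, ?_⟩ <;> nlinarith [ht.1, ht.2]
    · rw [max_eq_left (by linarith), min_eq_right h1]
      refine ⟨Or.inr (by ring), ?_, ?_, ?_⟩ <;> nlinarith [ht.1, ht.2]
  have hPr : ∀ s ∈ Set.Icc a b, (s = a ∨ ∃ k ∈ W.unmatched Γ, s ∈ Set.Icc (u k) (v k)) →
      ∀ t ∈ Set.Icc (0 : ℝ) 1, P (r (s, t)) = q s := by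
    intro s hs hk t ht
    obtain ⟨h1, h2, h3, h4⟩ := hr s hs.2 t ht
    rcases h1 with h1 | h1
    · rw [← (hPM s hs hk _ (h2.trans h3) h4).1]
      exact congrArg P (Prod.ext h1 rfl)
    · rw [← (hPM s hs hk _ h2 (h3.trans h4)).2]
      exact congrArg P (Prod.ext rfl h1)
  let H : ℝ × ℝ → ESp X d := fun z => mkE d (P (r z)) (Φ (r z) z.1)
  have hΦ1 : ∀ z s n, (∀ γ ∈ Γ, (W.letter γ.1).1 = n → Θ γ z = 1) →
      (∀ k ∈ W.unmatched Γ, (W.letter k).1 = n → θ k s = 1) → Φ z s n = 1 := by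
    intro z s n h1 h2
    simp only [Φ]
    rw [Finset.prod_eq_one fun γ hγ => ?_, Finset.prod_eq_one fun k hk => ?_, one_mul]
    · rw [Finset.mem_filter, hE] at hk
      exact h2 k hk.2 hk.1
    · rw [Finset.mem_filter, Finset.mem_product, hE] at hγ
      exact h1 γ hγ.2 hγ.1.1
  have hΦsolo : ∀ z s, (∀ γ ∈ Γ, Θ γ z = 1) → ∀ k ∈ W.unmatched Γ, s ∈ Set.Icc (u k) (v k) →
      Φ z s (W.letter k).1 = θ k s := by
    intro z s h1 k hk hs
    simp only [Φ]
    rw [Finset.prod_eq_one fun γ hγ => h1 γ (Finset.mem_filter.1 hγ).2, one_mul]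
    refine Finset.prod_eq_single k (fun l _ hl => hθ l s fun hls => ?_) fun hk' =>
      absurd (Finset.mem_filter.2 ⟨hE.2 rfl, hk⟩) hk'
    rcases lt_or_gt_of_ne hl with hlk | hlk
    · linarith [hord l k hlk, hls.2, hs.1]
    · linarith [hord k l hlk, hls.1, hs.2]
  have hout : ∀ s k l, s ∈ Set.Ioo (u k) (v k) → l ≠ k → θ l s = 1 := by
    intro s k l hs hl
    refine hθ l s fun hls => ?_
    rcases lt_or_gt_of_ne hl with hlk | hlk
    · linarith [hord l k hlk, hls.2, hs.1]
    · linarith [hord k l hlk, hls.1, hs.2]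
  have hpt : ∀ s k, s ∈ Set.Icc (u k) (v k) → (f s).pt = (d (W.letter k).1, θ k s) :=
    fun s k hs => hfα k s hs
  have hbase : ∀ s ∈ Set.Icc a b, (∀ k, s ∉ Set.Ioo (u k) (v k)) → (f s).pt = (q s, 1) :=
    fun s hs hk => Prod.ext rfl ((hfX s hs).2 hk)
  have hΘend : ∀ s ≤ b, ∀ γ ∈ Γ, ∀ z : ℝ × ℝ, 2 * b - s ≤ z.2 → Θ γ z = 1 := by
    intro s hs γ hγ z hz
    by_contra hne
    linarith [(hΘ γ z hne).1.2, (hI γ.2).2.2]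
  refine ⟨H, continuousOn_mkE hd (hP.comp (by fun_prop)).continuousOn (fun n => ?_) ?_,
    fun s hs => ?_, fun t ht => ⟨?_, ?_⟩, fun k hk s hs => ?_, fun s hs hk => ?_⟩
  · refine Continuous.continuousOn (.mul ?_ ?_) <;>
      refine continuous_finsetProd _ fun γ _ => (continuous_phase _).comp ?_
    · have h1 := (hα γ.1).continuous
      have h2 := (hα γ.2).continuous
      fun_prop
    · have h1 := (hα γ).continuous
      fun_prop
  · rintro ⟨s, t⟩ ⟨hs, ht⟩ n hne
    by_contra hPn
    refine hne (hΦ1 _ _ n (fun γ hγ hn => ?_) fun k hk hn => ?_) <;> by_contra h1 <;>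
      refine hPn ?_
    · obtain ⟨⟨h2, h3⟩, h4⟩ := hΘ _ _ h1
      have hle := (hr s hs.2 t ht).2.2.1
      rw [← hn]
      rcases h4 with h4 | h4
      · exact (hPG γ hγ _ ⟨h2.le, h4.le⟩ _ ⟨(hI γ.2).2.1.le, le_rfl⟩ _ hle h3.le).1
      · exact (hPG γ hγ _ ⟨le_rfl, (hI γ.1).2.1.le⟩ _ ⟨h4.le, h3.le⟩ _ h2.le hle).2
    · have hsk : s ∈ Set.Ioo (u k) (v k) := by_contra fun h' => h1 (hθ k s h')
      have hsk' := Set.Ioo_subset_Icc_self hsk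
      rw [← hn, ← hqd k s hsk']
      exact hPr s hs (Or.inr ⟨k, hk, hsk'⟩) t ht
  · refine ESp.ext_pt ?_
    simp only [H, hr0]
    rw [(hPd s hs).1]
    by_cases hk : ∃ k, s ∈ Set.Ioo (u k) (v k)
    · obtain ⟨k, hk⟩ := hk
      have hk' := Set.Ioo_subset_Icc_self hk
      rw [hpt s k hk', hqd k s hk', mkE_apply hd]
      congr 1
      by_cases hkΓ : k ∈ W.unmatched Γ
      · refine hΦsolo _ _ (fun γ hγ => ?_) k hkΓ hk'
        rw [hΘd γ hγ, hout s k _ hk (hkΓ γ hγ).1, hout s k _ hk (hkΓ γ hγ).2, one_mul]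
      · obtain ⟨γ, hγ, hγk⟩ : ∃ γ ∈ Γ, γ.1 = k ∨ γ.2 = k := by
          by_contra! hc
          exact hkΓ hc
        simp only [Φ]
        rw [Finset.prod_eq_one (s := (E _).filter _) fun l hl => hout s k l hk ?_, mul_one,
          Finset.prod_eq_single γ]
        · have hne := (hΓ.lt γ hγ).ne
          rw [hΘd γ hγ]
          rcases hγk with rfl | rfl
          · rw [hout s _ _ hk hne.symm, mul_one]
          · rw [hout s _ _ hk hne, one_mul]
        · intro q hq hqγ
          have hqΓ := (Finset.mem_filter.1 hq).2
          obtain ⟨e1, e2, e3, e4⟩ := hΓ.disj q hqΓ γ hγ hqγ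
          rw [hΘd q hqΓ]
          rcases hγk with rfl | rfl
          · rw [hout s _ _ hk e1, hout s _ _ hk e3, one_mul]
          · rw [hout s _ _ hk e2, hout s _ _ hk e4, one_mul]
        · intro hn
          refine absurd (Finset.mem_filter.2 ⟨Finset.mem_product.2 ⟨hE.2 ?_, hE.2 ?_⟩, hγ⟩) hn <;>
          · have := (hΓ.inv γ hγ).1
            rcases hγk with rfl | rfl <;> simp only [this]
        · rintro rfl
          exact hkΓ (Finset.mem_filter.1 hl).2
    · push Not at hk
      rw [hbase s hs hk]
      refine mkE_of_forall_eq_one hd _ fun n => hΦ1 _ _ n (fun γ hγ _ => ?_)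
        fun k _ _ => hθ k s (hk k)
      rw [hΘd γ hγ, hθ _ s (hk _), hθ _ s (hk _), one_mul]
  · refine ESp.ext_pt ?_
    have ha : a ∈ Set.Icc a b := ⟨le_rfl, hab⟩
    have hak : ∀ k, a ∉ Set.Ioo (u k) (v k) := fun k hk => (hI k).1.not_gt hk.1
    simp only [H]
    rw [hPr a ha (Or.inl rfl) t ht, hbase a ha hak]
    refine mkE_of_forall_eq_one hd _ fun n => hΦ1 _ _ n (fun γ hγ _ => ?_)
      fun k _ _ => hθ k a (hak k)
    by_contra hne
    have h1 := (hΘ γ _ hne).1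
    rcases (hr a hab t ht).1 with h2 | h2
    · rw [h2] at h1
      exact (hI γ.1).1.not_gt h1.1
    · exact hne (hΘend a hab γ hγ _ h2.ge)
  · refine ESp.ext_pt ?_
    have hb : b ∈ Set.Icc a b := ⟨hab, le_rfl⟩
    have hbk : ∀ k, b ∉ Set.Ioo (u k) (v k) := fun k hk => (hI k).2.2.not_gt hk.2
    have hrb : r (b, t) = (b, b) := by simp [r]
    simp only [H, hrb]
    rw [(hPd b hb).1, hbase b hb hbk]
    exact mkE_of_forall_eq_one hd _ fun n => hΦ1 _ _ n
      (fun γ hγ _ => hΘend b le_rfl γ hγ _ (by simp only; linarith)) fun k _ _ => hθ k b (hbk k)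
  · have hsab : s ∈ Set.Icc a b := ⟨(hI k).1.trans hs.1, hs.2.trans (hI k).2.2⟩
    refine ESp.ext_pt ?_
    simp only [H, hr1]
    rw [(hPd s hsab).2, hpt s k hs, hqd k s hs, mkE_apply hd]
    exact congrArg _ (hΦsolo _ _ (fun γ hγ => hΘend s hsab.2 γ hγ _ le_rfl) k hk hs)
  · simp only [H, hr1, InX]
    rw [mkE_of_forall_eq_one hd _ fun n => hΦ1 _ _ n
      (fun γ hγ _ => hΘend s hs.2 γ hγ _ le_rfl) fun k hkΓ _ => hθ k s (hk k hkΓ)]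

end

end

/-- Let `X` be simply connected and locally simply connected, `D` countable dense, and `f`
a proper path in `E(X,D)`.  Then there is a proper path `g`, homotopic to `f` rel
endpoints, whose word `W^g` is the reduced word equivalent to `W^f`. -/
theorem proper_path_reduced_word {X : Type*} [MetricSpace X]
    (d : ℕ+ → X) (hd : Function.Injective d) (hdense : DenseRange d)
    [SimplyConnectedSpace X] (hlsc : LocSimplyConnected X)
    (f : ℝ → ESp X d) (a b : ℝ) (hab : a ≤ b) (hf : IsProper d f a b)
    (W : InfWord ℕ+) (u v : W.ι → ℝ) (hreal : Realizes d f a b W u v) :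
    ∃ (g : ℝ → ESp X d) (W₀ : InfWord ℕ+) (u₀ v₀ : W₀.ι → ℝ),
      IsProper d g a b ∧ g a = f a ∧ g b = f b ∧
      Realizes d g a b W₀ u₀ v₀ ∧
      W₀.Reduced ∧ (∀ F : Finset ℕ+, W₀.evalF F = W.evalF F) ∧
      HtpyRel d f g a b := by
  obtain ⟨Γ, hΓ⟩ := W.exists_maximal_pairing
  obtain ⟨H, hH, h0, hends, hkeep, hX⟩ :=
    hreal.exists_cancelling_homotopy hlsc hd hab hf.1 hΓ.prop
  have hg := hreal.restrict (g := fun s => H (s, 1)) (W.unmatched Γ) hkeep hX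
  have h1 : (1 : ℝ) ∈ Set.Icc (0 : ℝ) 1 := ⟨zero_le_one, le_rfl⟩
  have hgc : ContinuousOn (fun s => H (s, 1)) (Set.Icc a b) :=
    hH.comp (by fun_prop) fun s hs => ⟨hs, h1⟩
  exact ⟨_, _, _, _, hg.isProper hab hgc, (hends 1 h1).1, (hends 1 h1).2, hg,
    reduced_of_maximal hΓ, hΓ.prop.evalF_restrict_unmatched, H, hH, fun s hs => ⟨h0 s hs, rfl⟩,
    hends⟩

end EarringPaper
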